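/- arXiv:1207.2987 — 4 statements merged into one kernel-verified Lean document; each statement's English description precedes it below -/
import Mathlib

section
/- Let l, n, d be positive integers with d ≥ n ≥ 2. Every word over an alphabet of l letters whose length is at least Ψ(n,d,l) = 4^{5+3·log_3 4} · l · (nd)^{3·log_3(nd) + 5 + 6·log_3 4} · d^2 either contains a subword of the form u^d (a d-th power of a nonempty word) or is n-divisible. -/
/-- `W` is `n`-divisible. -/
def IsNDivisible {α : Type*} [LinearOrder α] (n : ℕ) (W : List α) : Prop :=
  ∃ (v : List α) (us : List (List α)), us.length = n ∧ (∀ u ∈ us, u ≠ []) ∧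
    W = v ++ us.flatten ∧ us.Chain' (fun a b => b < a)

section aux
variable {α : Type*} [LinearOrder α]

lemma aux_nil_le (x : List α) : [] ≤ x := by
  rw [← not_lt]
  intro h
  cases x <;> cases h

lemma aux_cons_le (p q : α) (x y : List α) : p :: x ≤ q :: y ↔ p < q ∨ p = q ∧ x ≤ y := by
  rw [← not_lt, ← not_lt, List.cons_lt_cons_iff]
  rcases lt_trichotomy p q with h | h | h
  · simp [h, h.not_gt, h.ne']
  · simp [h]
  · simp [h, h.not_gt, h.ne']

lemma aux_take_le (a : ℕ) : ∀ (x y : List α), x ≤ y → x.take a ≤ y.take a := by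
  induction a with
  | zero => intro x y _; simp
  | succ a ih =>
    intro x y h
    cases x with
    | nil => rw [List.take_nil]; exact aux_nil_le _
    | cons p x =>
      cases y with
      | nil => exact absurd (le_antisymm h (aux_nil_le _)) (by simp)
      | cons q y =>
        simp only [List.take_succ_cons]
        rw [aux_cons_le] at h ⊢
        rcases h with h | ⟨h1, h2⟩
        · exact Or.inl h
        · exact Or.inr ⟨h1, ih _ _ h2⟩

lemma aux_take_le_self (a : ℕ) : ∀ (x : List α), x.take a ≤ x := by
  induction a with
  | zero => intro x; exact aux_nil_le _
  | succ a ih =>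
    intro x
    cases x with
    | nil => simp
    | cons p x =>
      simp only [List.take_succ_cons]
      rw [aux_cons_le]
      exact Or.inr ⟨rfl, ih _⟩

lemma aux_power (x : List α) (r G d : ℕ) (h : x.take G = (x.drop r).take G) (hd : d * r ≤ G) :
    (List.replicate d (x.take r)).flatten <+: x := by
  have key : ∀ j, j * r ≤ G + r → x.take (j * r) = (List.replicate j (x.take r)).flatten := by
    intro j
    induction j with
    | zero => simp
    | succ j ih =>
      intro hj
      have hj' : j * r ≤ G := by rw [Nat.succ_mul] at hj; omega
      have e1 : (x.drop r).take (j * r) = x.take (j * r) := by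
        have := congrArg (List.take (j * r)) h
        rw [List.take_take, List.take_take, Nat.min_eq_left hj'] at this
        exact this.symm
      rw [List.replicate_succ, List.flatten_cons, ← ih (by omega), ← e1, Nat.succ_mul,
        Nat.add_comm, List.take_add]
  rw [← key d (by omega)]
  exact List.take_prefix _ _

lemma aux_nopow {W : List α} {d : ℕ}
    (hp : ¬ ∃ u : List α, u ≠ [] ∧ (List.replicate d u).flatten <:+: W)
    (i r G : ℕ) (hi : i < W.length) (hr : 0 < r) (hd : d * r ≤ G)
    (h : (W.drop i).take G = (W.drop (i + r)).take G) : False := by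
  apply hp
  refine ⟨(W.drop i).take r, ?_, ?_⟩
  · intro h0
    have := congrArg List.length h0
    simp at this
    omega
  · have := aux_power (W.drop i) r G d (by rw [List.drop_drop]; exact h) hd
    exact this.isInfix.trans (List.drop_suffix _ _).isInfix

/-- chain of `k+1` positions ending at `j` -/
def AuxCh (W : List α) (k j : ℕ) : Prop :=
  ∃ g : ℕ → ℕ, g k = j ∧ ∀ s < k, g s < g (s+1) ∧ W.drop (g (s+1)) < W.drop (g s)

lemma aux_block {W : List α} {d : ℕ} (hd0 : 0 < d)
    (hp : ¬ ∃ u : List α, u ≠ [] ∧ (List.replicate d u).flatten <:+: W)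
    (g : ℕ → ℕ) (hL : g d < W.length)
    (hg : ∀ s < d, g s < g (s+1) ∧ W.drop (g (s+1)) < W.drop (g s)) :
    W.drop (g d) < (W.drop (g 0)).take (g d - g 0) := by
  by_contra hcon
  rw [not_lt] at hcon
  set G := g d - g 0 with hG
  have mono : ∀ s t, s ≤ t → t ≤ d → g s ≤ g t ∧ W.drop (g t) ≤ W.drop (g s) := by
    intro s t hst
    induction t, hst using Nat.le_induction with
    | base => intro _; exact ⟨le_rfl, le_rfl⟩
    | succ t _ ih =>
      intro ht
      have h1 := ih (by omega)
      have h2 := hg t (by omega)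
      exact ⟨h1.1.trans h2.1.le, h2.2.le.trans h1.2⟩
  have eqs : ∀ s ≤ d, (W.drop (g s)).take G = (W.drop (g 0)).take G := by
    intro s hs
    apply le_antisymm
    · exact aux_take_le _ _ _ (mono 0 s (by omega) hs).2
    · have := aux_take_le G _ _ (hcon.trans (mono s d hs le_rfl).2)
      rwa [List.take_take, Nat.min_self] at this
  have sum : ∀ t ≤ d, g t = g 0 + ∑ s ∈ Finset.range t, (g (s+1) - g s) := by
    intro t
    induction t with
    | zero => simp
    | succ t ih =>
      intro ht
      rw [Finset.sum_range_succ, ← add_assoc, ← ih (by omega)]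
      have := (hg t (by omega)).1
      omega
  have hs : ∃ s ∈ Finset.range d, d * (g (s+1) - g s) ≤ G := by
    apply Finset.exists_le_of_sum_le (Finset.nonempty_range_iff.mpr (by omega))
    rw [← Finset.mul_sum, Finset.sum_const, Finset.card_range, smul_eq_mul]
    have := sum d le_rfl
    apply Nat.mul_le_mul_left
    omega
  obtain ⟨s, hs, hle⟩ := hs
  rw [Finset.mem_range] at hs
  have h1 := (hg s hs).1
  have h2 := (mono s d hs.le le_rfl).1
  refine aux_nopow hp (g s) (g (s+1) - g s) G (by omega) (by omega) hle ?_
  rw [eqs s hs.le, show g s + (g (s+1) - g s) = g (s+1) by omega, eqs (s+1) hs]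

lemma aux_flatten (W : List α) (h : ℕ → ℕ) (m : ℕ) (hm : ∀ s < m, h s ≤ h (s+1)) :
    h 0 ≤ h m ∧ ((List.range m).map fun t => (W.drop (h t)).take (h (t+1) - h t)).flatten
      = (W.drop (h 0)).take (h m - h 0) := by
  induction m with
  | zero => simp
  | succ m ih =>
    obtain ⟨i1, i2⟩ := ih (fun s hs => hm s (by omega))
    have h1 := hm m (by omega)
    refine ⟨i1.trans h1, ?_⟩
    rw [List.range_succ, List.map_append, List.flatten_append, i2]
    simp only [List.map_cons, List.map_nil, List.flatten_cons, List.flatten_nil, List.append_nil]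
    rw [show h (m+1) - h 0 = (h m - h 0) + (h (m+1) - h m) by omega, List.take_add,
      List.drop_drop, show h 0 + (h m - h 0) = h m by omega]

lemma aux_div {W : List α} {n d : ℕ} (hn : 0 < n) (hd0 : 0 < d)
    (hp : ¬ ∃ u : List α, u ≠ [] ∧ (List.replicate d u).flatten <:+: W)
    (j : ℕ) (hj : j < W.length) (hc : AuxCh W ((n-1)*d) j) : IsNDivisible n W := by
  obtain ⟨g, rfl, hg⟩ := hc
  have mono : ∀ s t, s ≤ t → t ≤ (n-1)*d → g s + (t - s) ≤ g t := by
    intro s t hst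
    induction t, hst using Nat.le_induction with
    | base => intro _; simp
    | succ t _ ih =>
      intro ht
      have h1 := ih (by omega)
      have h2 := hg t (by omega)
      omega
  let h : ℕ → ℕ := fun t => if t < n then g (t * d) else W.length
  have hle : ∀ t, t < n → t * d ≤ (n-1)*d := fun t ht => Nat.mul_le_mul_right _ (by omega)
  have hlt : ∀ s < n, h s < h (s+1) := by
    intro s hs
    by_cases hs' : s + 1 < n
    · simp only [h, hs, hs', if_true]
      have := mono (s*d) ((s+1)*d) (Nat.mul_le_mul_right _ (by omega)) (hle _ hs')
      rw [Nat.succ_mul] at *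
      omega
    · simp only [h, hs, hs', if_true, if_false]
      have := mono (s*d) _ (hle _ hs) le_rfl
      omega
  obtain ⟨f1, f2⟩ := aux_flatten W h n (fun s hs => (hlt s hs).le)
  have hhn : h n = W.length := by simp [h]
  have hbd : ∀ s < n, h s < W.length := by
    intro s hs
    simp only [h, hs, if_true]
    have := mono (s*d) _ (hle _ hs) le_rfl
    omega
  refine ⟨W.take (h 0), (List.range n).map fun t => (W.drop (h t)).take (h (t+1) - h t),
    by simp, ?_, ?_, ?_⟩
  · intro u hu
    simp only [List.mem_map, List.mem_range] at hu
    obtain ⟨t, ht, rfl⟩ := hu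
    intro h0
    have := congrArg List.length h0
    have h1 := hlt t ht
    have h2 := hbd t ht
    simp at this
    omega
  · rw [f2, hhn, List.take_of_length_le (l := W.drop (h 0)) (by rw [List.length_drop]),
      List.take_append_drop]
  · show List.IsChain _ _
    rw [List.isChain_iff_getElem]
    intro t ht
    simp only [List.length_map, List.length_range] at ht
    simp only [List.getElem_map, List.getElem_range]
    refine lt_of_le_of_lt (aux_take_le_self _ _) ?_
    have ht0 : t < n := by omega
    simp only [h, ht, ht0, if_true]
    have := aux_block hd0 hp (fun s => g (t*d + s)) ?_ ?_
    · simpa [Nat.succ_mul] using this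
    · have := hbd (t+1) ht
      simpa only [h, ht, if_true, Nat.succ_mul] using this
    · intro s hs
      have := hle _ ht
      rw [Nat.succ_mul] at this
      exact hg (t*d+s) (by omega)

/-- abstract colouring data -/
lemma aux_color {W : List α} {N : ℕ} (hN : ∀ j < W.length, ¬ AuxCh W N j) :
    ∃ c : ℕ → ℕ, (∀ i, c i < N + 1) ∧
      ∀ i j, i ≤ j → c i = c j → W.drop i ≤ W.drop j := by
  classical
  refine ⟨fun i => if i < W.length then Nat.findGreatest (fun k => AuxCh W k i) N else N, ?_, ?_⟩
  · intro i
    dsimp only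
    split_ifs
    · exact Nat.lt_succ_of_le (Nat.findGreatest_le _)
    · omega
  · have hch : ∀ i, AuxCh W (Nat.findGreatest (fun k => AuxCh W k i) N) i := by
      intro i
      exact Nat.findGreatest_spec (P := fun k => AuxCh W k i) (m := 0) (Nat.zero_le _)
        ⟨fun _ => i, rfl, by simp⟩
    have hlt : ∀ i < W.length, Nat.findGreatest (fun k => AuxCh W k i) N < N := by
      intro i hi
      refine lt_of_le_of_ne (Nat.findGreatest_le _) ?_
      intro h0
      have := hch i
      rw [h0] at this
      exact hN i hi this
    intro i j hij hc
    dsimp only at hc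
    by_cases hi : i < W.length
    · by_cases hj : j < W.length
      · rw [if_pos hi, if_pos hj] at hc
        by_contra hcon
        rw [not_le] at hcon
        have hij' : i < j := by
          rcases hij.lt_or_eq with h | h
          · exact h
          · subst h; exact absurd hcon (lt_irrefl _)
        have : AuxCh W (Nat.findGreatest (fun k => AuxCh W k i) N + 1) j := by
          obtain ⟨g, h1, h2⟩ := hch i
          set k := Nat.findGreatest (fun k => AuxCh W k i) N
          refine ⟨fun s => if s ≤ k then g s else j, by simp, ?_⟩
          intro s hs
          by_cases hsk : s = k
          · subst hsk
            simp [h1, hij', hcon]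
          · have a1 : s ≤ k := by omega
            have a2 : s + 1 ≤ k := by omega
            simp only [a1, a2, if_true]
            exact h2 s (by omega)
        have := Nat.le_findGreatest (P := fun k => AuxCh W k j) (hlt i hi) this
        omega
      · rw [if_pos hi, if_neg hj] at hc
        have := hlt i hi
        omega
    · rw [List.drop_eq_nil_of_le (by omega : W.length ≤ i),
        List.drop_eq_nil_of_le (by omega : W.length ≤ j)]

/-- invariant -/
def AuxInv (W : List α) (c : ℕ → ℕ) (a P : ℕ) : Prop :=
  ∃ t : ℕ → ℕ, Monotone t ∧ (∀ i, t i ≤ P) ∧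
    ∀ i j, c i = c j → t i = t j → (W.drop i).take a = (W.drop j).take a

lemma aux_count {W : List α} {c : ℕ → ℕ}
    (hc : ∀ i j, i ≤ j → c i = c j → W.drop i ≤ W.drop j) (a P : ℕ)
    (hP : ∀ m, ((Finset.range m).image fun i => (c i, (W.drop i).take a)).card ≤ P) :
    AuxInv W c a P := by
  refine ⟨fun i => ((Finset.range (i+1)).image fun i => (c i, (W.drop i).take a)).card,
    ?_, fun i => hP _, ?_⟩
  · intro i j hij
    apply Finset.card_le_card
    apply Finset.image_subset_image
    apply Finset.range_mono
    omega
  · have main : ∀ i j, i ≤ j → c i = c j →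
      ((Finset.range (i+1)).image fun i => (c i, (W.drop i).take a)).card =
      ((Finset.range (j+1)).image fun i => (c i, (W.drop i).take a)).card →
      (W.drop i).take a = (W.drop j).take a := by
      intro i j hij hcc ht
      have hsub := Finset.eq_of_subset_of_card_le (Finset.image_subset_image
        (f := fun i => (c i, (W.drop i).take a))
        (Finset.range_mono (by omega : i + 1 ≤ j + 1))) ht.ge
      have hmem : (c j, (W.drop j).take a) ∈
          (Finset.range (j+1)).image fun i => (c i, (W.drop i).take a) :=
        Finset.mem_image.mpr ⟨j, by simp, rfl⟩
      rw [← hsub, Finset.mem_image] at hmem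
      obtain ⟨q, hq, he⟩ := hmem
      rw [Finset.mem_range] at hq
      rw [Prod.mk.injEq] at he
      apply le_antisymm
      · exact aux_take_le _ _ _ (hc i j hij hcc)
      · rw [← he.2]
        exact aux_take_le _ _ _ (hc q i (by omega) (by omega))
    intro i j hcc ht
    rcases le_total i j with h | h
    · exact main i j h hcc ht
    · exact (main j i h hcc.symm ht.symm).symm

lemma aux_card_factor {β γ : Type*} [DecidableEq β] [DecidableEq γ] (s : Finset ℕ)
    (p : ℕ → β) (q : ℕ → γ) (T : Finset γ) (hT : ∀ i, q i ∈ T)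
    (h : ∀ i j, q i = q j → p i = p j) : (s.image p).card ≤ T.card := by
  have hf : Function.FactorsThrough p q := fun i j hij => h i j hij
  haveI : Nonempty β := ⟨p 0⟩
  obtain ⟨e, he⟩ := (Function.factorsThrough_iff p).mp hf
  rw [he, ← Finset.image_image]
  refine Finset.card_image_le.trans (Finset.card_le_card ?_)
  intro x hx
  obtain ⟨i, _, rfl⟩ := Finset.mem_image.mp hx
  exact hT i

lemma aux_step {W : List α} {c : ℕ → ℕ} {K : ℕ} (hK : ∀ i, c i < K)
    (hc : ∀ i j, i ≤ j → c i = c j → W.drop i ≤ W.drop j) (a P : ℕ)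
    (h : AuxInv W c a P) : AuxInv W c (3 * a) (K ^ 3 * (3 * P + 1)) := by
  obtain ⟨t, tm, tP, ht⟩ := h
  apply aux_count hc
  intro m
  have := aux_card_factor (Finset.range m) (fun i => (c i, (W.drop i).take (3 * a)))
    (fun i => (c i, c (i+a), c (i+2*a), t i + t (i+a) + t (i+2*a)))
    (Finset.range K ×ˢ Finset.range K ×ˢ Finset.range K ×ˢ Finset.range (3*P+1)) ?_ ?_
  · refine this.trans (le_of_eq ?_)
    simp only [Finset.card_product, Finset.card_range]
    ring
  · intro i
    simp only [Finset.mem_product, Finset.mem_range]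
    have := tP i
    have := tP (i+a)
    have := tP (i+2*a)
    exact ⟨hK _, hK _, hK _, by omega⟩
  · intro i j hij
    simp only [Prod.mk.injEq] at hij ⊢
    obtain ⟨h1, h2, h3, h4⟩ := hij
    refine ⟨h1, ?_⟩
    have hh : t i = t j ∧ t (i+a) = t (j+a) ∧ t (i+2*a) = t (j+2*a) := by
      rcases le_total i j with hl | hl
      · have := tm hl
        have := tm (by omega : i + a ≤ j + a)
        have := tm (by omega : i + 2*a ≤ j + 2*a)
        omega
      · have := tm hl
        have := tm (by omega : j + a ≤ i + a)
        have := tm (by omega : j + 2*a ≤ i + 2*a)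
        omega
    have e1 := ht _ _ h1 hh.1
    have e2 := ht _ _ h2 hh.2.1
    have e3 := ht _ _ h3 hh.2.2
    have split : ∀ i, (W.drop i).take (3*a) =
        (W.drop i).take a ++ ((W.drop (i+a)).take a ++ (W.drop (i+2*a)).take a) := by
      intro i
      rw [show 3 * a = a + (a + a) by ring, List.take_add, List.take_add, List.drop_drop,
        List.drop_drop, show i + a + a = i + 2*a by ring]
    rw [split, split, e1, e2, e3]

lemma aux_periodic {W : List α} {d : ℕ} (hd0 : 0 < d)
    (hp : ¬ ∃ u : List α, u ≠ [] ∧ (List.replicate d u).flatten <:+: W)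
    {c : ℕ → ℕ} {K : ℕ} (hK : ∀ i, c i < K) (a : ℕ) (ha : K ≤ a) (s : ℕ)
    (hs : s + (K + d * K) ≤ W.length)
    (hI : ∀ i j, s ≤ i → i < s + (K + d * K) → s ≤ j → j < s + (K + d * K) → c i = c j →
      (W.drop i).take a = (W.drop j).take a) : False := by
  have hK0 : 0 < K := lt_of_le_of_lt (Nat.zero_le _) (hK 0)
  have hdK : K ≤ d * K := Nat.le_mul_of_pos_left _ hd0
  set e := s + (K + d * K) with he
  let Q : ℕ → ℕ := fun m => ((Finset.Ico s e).image fun i => (W.drop i).take m).card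
  have hQa : Q a ≤ K := by
    have h1 : ∀ x ∈ Finset.Ico s e, ∀ y ∈ Finset.Ico s e, c x = c y →
        (W.drop x).take a = (W.drop y).take a := by
      intro x hx y hy
      rw [Finset.mem_Ico] at hx hy
      exact hI x y hx.1 hx.2 hy.1 hy.2
    by_contra hcon
    rw [not_le] at hcon
    -- choose representatives
    have : ∀ w ∈ (Finset.Ico s e).image (fun i => (W.drop i).take a),
        ∃ i ∈ Finset.Ico s e, (W.drop i).take a = w := by
      intro w hw; exact Finset.mem_image.mp hw
    choose! r hr1 hr2 using this
    obtain ⟨w, hw, w', hw', hne, heq⟩ := Finset.exists_ne_map_eq_of_card_lt_of_maps_to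
      (t := Finset.range K) (f := fun w => c (r w)) (by simpa using hcon)
      (fun w hw => by simp [hK])
    apply hne
    rw [← hr2 w hw, ← hr2 w' hw']
    exact h1 _ (hr1 w hw) _ (hr1 w' hw') heq
  have hm : ∃ m < a, Q (m+1) ≤ Q m := by
    by_contra hcon
    push Not at hcon
    have : ∀ m ≤ a, m + 1 ≤ Q m := by
      intro m
      induction m with
      | zero =>
        intro _
        apply Finset.card_pos.mpr
        apply Finset.Nonempty.image
        rw [Finset.nonempty_Ico]
        omega
      | succ m ih =>
        intro hma
        have := ih (by omega)
        have := hcon m (by omega)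
        omega
    have := this a le_rfl
    omega
  obtain ⟨m, hma, hQ⟩ := hm
  have det : ∀ i j, s ≤ i → i < e → s ≤ j → j < e → (W.drop i).take m = (W.drop j).take m →
      (W.drop i).take (m+1) = (W.drop j).take (m+1) := by
    have him : ((Finset.Ico s e).image fun i => (W.drop i).take (m+1)).image (List.take m)
        = (Finset.Ico s e).image fun i => (W.drop i).take m := by
      rw [Finset.image_image]
      apply Finset.image_congr
      intro i _
      simp [List.take_take]
    have hinj := Finset.injOn_of_card_image_eq (s := (Finset.Ico s e).image fun i =>
      (W.drop i).take (m+1)) (f := List.take m)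
      (le_antisymm Finset.card_image_le (by rw [him]; exact hQ))
    intro i j hi1 hi2 hj1 hj2 hij
    apply hinj
    · exact Finset.mem_coe.mpr (Finset.mem_image.mpr ⟨i, Finset.mem_Ico.mpr ⟨hi1, hi2⟩, rfl⟩)
    · exact Finset.mem_coe.mpr (Finset.mem_image.mpr ⟨j, Finset.mem_Ico.mpr ⟨hj1, hj2⟩, rfl⟩)
    · simpa [List.take_take] using hij
  have prop : ∀ T i j, s ≤ i → i ≤ j → j + T ≤ e → (W.drop i).take m = (W.drop j).take m →
      (W.drop i).take T = (W.drop j).take T := by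
    intro T
    induction T with
    | zero => simp
    | succ T ih =>
      intro i j hi hij hj hw
      have h1 := det i j hi (by omega) (by omega) (by omega) hw
      rw [List.drop_eq_getElem_cons (by omega : i < W.length),
        List.drop_eq_getElem_cons (by omega : j < W.length)] at h1 ⊢
      rw [List.take_succ_cons, List.take_succ_cons, List.cons.injEq] at h1 ⊢
      exact ⟨h1.1, ih (i+1) (j+1) (by omega) (by omega) (by omega) h1.2⟩
  obtain ⟨x, hx, y, hy, hne, heq⟩ := Finset.exists_ne_map_eq_of_card_lt_of_maps_to
      (s := Finset.range (K+1)) (t := Finset.range K) (f := fun w => c (s + w)) (by simp)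
      (fun w hw => by simp [hK])
  rw [Finset.mem_range] at hx hy
  have fin : ∀ x y, x < y → y < K + 1 → c (s+x) = c (s+y) → False := by
    intro x y hxy hy hcc
    have h1 := hI (s+x) (s+y) (by omega) (by omega) (by omega) (by omega) hcc
    have h2 : (W.drop (s+x)).take m = (W.drop (s+y)).take m := by
      have := congrArg (List.take m) h1
      simpa [List.take_take, Nat.min_eq_left hma.le] using this
    have h3 := prop (d*K) (s+x) (s+y) (by omega) (by omega) (by omega) h2
    refine aux_nopow hp (s+x) (y-x) (d*K) (by omega) (by omega)
      (Nat.mul_le_mul_left _ (by omega)) ?_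
    rw [h3, show s + x + (y - x) = s + y by omega]
  rcases lt_or_gt_of_ne hne with h | h
  · exact fin x y h hy heq
  · exact fin y x h hx heq.symm

lemma aux_long {W : List α} {d : ℕ} (hd0 : 0 < d)
    (hp : ¬ ∃ u : List α, u ≠ [] ∧ (List.replicate d u).flatten <:+: W)
    {c : ℕ → ℕ} {K : ℕ} (hK : ∀ i, c i < K) (a P : ℕ) (ha : K ≤ a)
    (h : AuxInv W c a P) : W.length < (P + 1) * (K + d * K) := by
  by_contra hcon
  rw [not_lt] at hcon
  obtain ⟨t, tm, tP, ht⟩ := h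
  have hK0 : 0 < K := lt_of_le_of_lt (Nat.zero_le _) (hK 0)
  set B := K + d * K with hB
  have step : ∀ q ≤ P, t (q * B) < t (q * B + (B - 1)) := by
    intro q hq
    by_contra hcon2
    have hqB : q * B + B ≤ (P+1) * B := by
      rw [← Nat.succ_mul]; exact Nat.mul_le_mul_right _ (by omega)
    refine aux_periodic hd0 hp hK a ha (q * B) (by omega) ?_
    intro i j hi1 hi2 hj1 hj2 hcc
    apply ht i j hcc
    have := tm hi1
    have := tm hj1
    have := tm (by omega : i ≤ q * B + (B-1))
    have := tm (by omega : j ≤ q * B + (B-1))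
    omega
  have : ∀ q ≤ P + 1, q ≤ t (q * B) := by
    intro q
    induction q with
    | zero => simp
    | succ q ih =>
      intro hq
      have h1 := ih (by omega)
      have h2 := step q (by omega)
      have h3 := tm (by rw [Nat.succ_mul]; omega : q * B + (B-1) ≤ (q+1) * B)
      omega
  have h1 := this (P+1) le_rfl
  have h2 := tP ((P+1) * B)
  omega

end aux

lemma aux_base {l : ℕ} {W : List (Fin l)} {c : ℕ → ℕ} {K : ℕ} (hK : ∀ i, c i < K)
    (hc : ∀ i j, i ≤ j → c i = c j → W.drop i ≤ W.drop j) :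
    AuxInv W c 1 (K * (l + 1)) := by
  apply aux_count hc
  intro m
  have := aux_card_factor (Finset.range m) (fun i => (c i, (W.drop i).take 1))
    (fun i => (c i, (W.drop i).head?))
    (Finset.range K ×ˢ (Finset.univ : Finset (Option (Fin l)))) ?_ ?_
  · refine this.trans (le_of_eq ?_)
    simp [Finset.card_product]
  · intro i
    simp [hK]
  · intro i j hij
    simp only [Prod.mk.injEq] at hij ⊢
    refine ⟨hij.1, ?_⟩
    rw [List.take_one, List.take_one, hij.2]

lemma aux_iter {l : ℕ} (hl : 0 < l) {W : List (Fin l)} {c : ℕ → ℕ} {K : ℕ} (hK : ∀ i, c i < K)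
    (hc : ∀ i j, i ≤ j → c i = c j → W.drop i ≤ W.drop j) (k : ℕ) :
    ∃ P, 0 < P ∧ P ≤ (4 * K ^ 3) ^ k * (2 * K * l) ∧ AuxInv W c (3 ^ k) P := by
  have hK0 : 0 < K := lt_of_le_of_lt (Nat.zero_le _) (hK 0)
  induction k with
  | zero =>
    refine ⟨K * (l+1), by positivity, ?_, by simpa using aux_base hK hc⟩
    have : K * (l+1) ≤ K * (2 * l) := Nat.mul_le_mul_left _ (by omega)
    calc _ ≤ _ := this
      _ = _ := by ring
  | succ k ih =>
    obtain ⟨P, h0, h1, h2⟩ := ih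
    refine ⟨K ^ 3 * (3 * P + 1), by positivity, ?_, ?_⟩
    · calc K ^ 3 * (3 * P + 1) ≤ K ^ 3 * (4 * P) := Nat.mul_le_mul_left _ (by omega)
        _ = 4 * K ^ 3 * P := by ring
        _ ≤ 4 * K ^ 3 * ((4 * K ^ 3) ^ k * (2 * K * l)) := Nat.mul_le_mul_left _ h1
        _ = _ := by ring
    · rw [pow_succ, mul_comm]
      exact aux_step hK hc _ _ h2

lemma aux_real (l X k d : ℕ) (hX : 1 ≤ X) (hk : 3 ^ k ≤ 4 * X) :
    ((l * d ^ 2 * (4 * X) ^ (5 + 3 * k) : ℕ) : ℝ) ≤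
    (4 : ℝ) ^ ((5 : ℝ) + 3 * Real.logb 3 4) * l *
        (X : ℝ) ^ (3 * Real.logb 3 (X : ℝ) + 5 + 6 * Real.logb 3 4) * (d : ℝ) ^ 2 := by
  have hX0 : (0 : ℝ) < X := by exact_mod_cast hX
  have hT : 0 < Real.log 3 := Real.log_pos (by norm_num)
  have hk' : k * Real.log 3 ≤ Real.log 4 + Real.log X := by
    rw [← Real.log_mul (by norm_num) hX0.ne', ← Real.log_pow]
    apply Real.log_le_log (by positivity)
    exact_mod_cast hk
  have hA : 0 ≤ Real.log 4 := Real.log_nonneg (by norm_num)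
  have hB : 0 ≤ Real.log X := Real.log_nonneg (by exact_mod_cast hX)
  have key : (4 * X : ℝ) ^ (5 + 3 * k) ≤ (4 : ℝ) ^ ((5 : ℝ) + 3 * Real.logb 3 4) *
        (X : ℝ) ^ (3 * Real.logb 3 (X : ℝ) + 5 + 6 * Real.logb 3 4) := by
    rw [← Real.rpow_natCast, Real.rpow_def_of_pos (by positivity),
      Real.rpow_def_of_pos (by norm_num), Real.rpow_def_of_pos hX0, ← Real.exp_add]
    apply Real.exp_le_exp.mpr
    rw [Real.log_mul (by norm_num) hX0.ne']
    unfold Real.logb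
    have hk2 : (k : ℝ) ≤ (Real.log 4 + Real.log X) / Real.log 3 := by
      rwa [le_div_iff₀ hT]
    have h3 := mul_le_mul_of_nonneg_left hk2 (add_nonneg hA hB)
    push_cast
    have e : Real.log 4 * (5 + 3 * (Real.log 4 / Real.log 3)) +
      Real.log X * (3 * (Real.log X / Real.log 3) + 5 + 6 * (Real.log 4 / Real.log 3)) =
      5 * (Real.log 4 + Real.log X) + 3 * ((Real.log 4 + Real.log X) *
        ((Real.log 4 + Real.log X) / Real.log 3)) := by
      field_simp
      ring
    rw [e]
    linarith
  push_cast
  calc (l : ℝ) * d ^ 2 * (4 * X) ^ (5 + 3 * k) ≤ l * d ^ 2 * _ :=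
        mul_le_mul_of_nonneg_left key (by positivity)
    _ = _ := by ring

/-- Theorem: every word over an `l`-letter alphabet of length at least
`Ψ(n,d,l) = 4^(5+3·log₃4) · l · (nd)^(3·log₃(nd)+5+6·log₃4) · d²`
contains a `d`-th power of a nonempty word or is `n`-divisible. -/
theorem stmt_9 (l n d : ℕ) (hl : 0 < l) (hn : 2 ≤ n) (hd : n ≤ d)
    (W : List (Fin l))
    (hlen : (4 : ℝ) ^ ((5 : ℝ) + 3 * Real.logb 3 4) * l *
        ((n * d : ℕ) : ℝ) ^ (3 * Real.logb 3 ((n * d : ℕ) : ℝ) + 5 + 6 * Real.logb 3 4) *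
        (d : ℝ) ^ 2 ≤ (W.length : ℝ)) :
    (∃ u : List (Fin l), u ≠ [] ∧ (List.replicate d u).flatten <:+: W) ∨
      IsNDivisible n W := by
  by_cases hp : ∃ u : List (Fin l), u ≠ [] ∧ (List.replicate d u).flatten <:+: W
  · exact Or.inl hp
  right
  by_contra hdiv
  have hd0 : 0 < d := by omega
  obtain ⟨c, hc1, hc2⟩ := aux_color (W := W) (N := (n-1)*d)
    (fun j hj hch => hdiv (aux_div (by omega) hd0 hp j hj hch))
  set X := n * d with hX
  have hKX : (n-1)*d + 1 ≤ X := by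
    obtain ⟨n', rfl⟩ : ∃ n', n = n' + 1 := ⟨n-1, by omega⟩
    rw [hX, Nat.succ_mul]
    simp only [Nat.add_sub_cancel]
    omega
  have hc1 : ∀ i, c i < X := fun i => (hc1 i).trans_le hKX
  have hX1 : 1 < X := by nlinarith
  obtain ⟨P, hP0, hP1, hP2⟩ := aux_iter hl hc1 hc2 (Nat.clog 3 X)
  set k := Nat.clog 3 X with hk
  have hlong := aux_long hd0 hp hc1 _ P (Nat.le_pow_clog (by norm_num) X) hP2
  have hk3 : 3 ^ k ≤ 4 * X := by
    have h1 := Nat.pow_pred_clog_lt_self (b := 3) (by norm_num) hX1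
    have h2 : 0 < k := Nat.clog_pos (by norm_num) (by omega)
    rw [← hk] at h1
    obtain ⟨k', hk'⟩ : ∃ k', k = k' + 1 := ⟨k-1, by omega⟩
    rw [hk'] at h1 ⊢
    simp only [Nat.pred_succ, Nat.add_sub_cancel] at h1
    rw [pow_succ]
    omega
  have hreal := (aux_real l X k d hX1.le hk3).trans hlen
  have hnat : l * d ^ 2 * (4 * X) ^ (5 + 3 * k) ≤ W.length := by exact_mod_cast hreal
  have hle : (P + 1) * (X + d * X) ≤ l * d ^ 2 * (4 * X) ^ (5 + 3 * k) := by
    have hdX : X ≤ d * X := Nat.le_mul_of_pos_left _ hd0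
    calc (P + 1) * (X + d * X) ≤ (2 * P) * (2 * (d * X)) := Nat.mul_le_mul (by omega) (by omega)
      _ ≤ (2 * ((4 * X ^ 3) ^ k * (2 * X * l))) * (2 * (d * X)) := by gcongr
      _ = l * (d * 1) * (4 * X ^ 3) ^ k * (8 * (X^2 * 1)) := by ring
      _ ≤ l * (d * d) * (64 * X ^ 3) ^ k * (1024 * (X^2 * X^3)) := by
          gcongr
          · omega
          · norm_num
          · norm_num
          · exact Nat.one_le_pow _ _ (by omega)
      _ = _ := by
          rw [pow_add, pow_mul]
          ring
  omega
end

section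
/- Let l, n, d be positive integers with d ≥ n ≥ 2. Every word over an alphabet of l letters of length at least 256 · l · (nd)^{2·log_2(nd) + 10} · d^2 either contains a d-th power of a nonempty subword or is n-divisible. -/
section aux
variable {α : Type*} [LinearOrder α]

/-- subword of length `q` at position `i` -/
def pre (W : List α) (q i : ℕ) : List α := (W.drop i).take q

theorem lt_append_of_lt (a b x y : List α) (hl : a.length = b.length) (h : a < b) :
    a ++ x < b ++ y := by
  induction a generalizing b with
  | nil => cases b with
    | nil => simp at h
    | cons c b => simp at hl
  | cons c a ih => cases b with
    | nil => simp at hl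
    | cons e b =>
      simp only [List.cons_append, List.cons_lt_cons_iff] at h ⊢
      rcases h with h | ⟨h1, h2⟩
      · exact Or.inl h
      · exact Or.inr ⟨h1, ih b (by simpa using hl) h2⟩

theorem lt_of_take_lt (u v : List α) (q : ℕ) (hu : q ≤ u.length) (hv : q ≤ v.length)
    (h : u.take q < v.take q) : u < v := by
  have := lt_append_of_lt (u.take q) (v.take q) (u.drop q) (v.drop q) (by simp [hu, hv]) h
  simpa using this

theorem pre_length (W : List α) (q i : ℕ) (h : i + q ≤ W.length) : (pre W q i).length = q := by
  simp [pre]; omega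

theorem pre_pre (W : List α) (q M i b : ℕ) (h : b + q ≤ M) :
    pre (pre W M i) q b = pre W q (i + b) := by
  simp only [pre, List.drop_take, List.take_take, List.drop_drop]
  congr 1; omega

theorem pre_add (W : List α) (a b i : ℕ) : pre W (a + b) i = pre W a i ++ pre W b (i + a) := by
  simp [pre, List.take_add, List.drop_drop]

theorem div_aux (W : List α) (q : ℕ) (hq : 0 < q) (m : ℕ) : ∀ f : ℕ → ℕ,
    (∀ j < m, f j + q ≤ f (j + 1)) → f m + q ≤ W.length →
    (∀ j < m, pre W q (f (j + 1)) < pre W q (f j)) →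
    ∃ (u : List α) (us : List (List α)), us.length = m ∧ (∀ x ∈ u :: us, x ≠ []) ∧
      W.drop (f 0) = (u :: us).flatten ∧ (u :: us).IsChain (fun a b => b < a) ∧
      q ≤ u.length ∧ u.take q = pre W q (f 0) := by
  induction m with
  | zero =>
    intro f _ h2 _
    refine ⟨W.drop (f 0), [], rfl, ?_, by simp, by simp, ?_, rfl⟩
    · intro x hx
      simp only [List.mem_singleton] at hx
      subst hx
      apply List.ne_nil_of_length_pos
      simp; omega
    · simp; omega
  | succ m ih =>
    intro f h1 h2 h3
    obtain ⟨u, us, hl, hne, hfl, hch, hqu, htk⟩ := ih (fun j => f (j + 1))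
      (fun j hj => h1 (j + 1) (by omega)) h2 (fun j hj => h3 (j + 1) (by omega))
    have h10 := h1 0 (by omega)
    have h30 := h3 0 (by omega)
    simp only [zero_add] at *
    have hle : f 1 ≤ W.length := by
      by_contra hcon
      have : (W.drop (f 1)).length = 0 := by simp; omega
      rw [hfl] at this
      simp at this
      have := this.1
      subst this
      simp at hqu; omega
    have hdl : (pre W (f 1 - f 0) (f 0)).length = f 1 - f 0 := pre_length _ _ _ (by omega)
    have htk0 : (pre W (f 1 - f 0) (f 0)).take q = pre W q (f 0) := by
      simp only [pre, List.take_take]; congr 1; omega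
    refine ⟨pre W (f 1 - f 0) (f 0), u :: us, by simp [hl], ?_, ?_, ?_, by omega, htk0⟩
    · intro x hx
      rcases List.mem_cons.1 hx with rfl | hx
      · apply List.ne_nil_of_length_pos; omega
      · exact hne x hx
    · rw [List.flatten_cons, ← hfl]
      have : W.drop (f 1) = (W.drop (f 0)).drop (f 1 - f 0) := by
        rw [List.drop_drop]; congr 1; omega
      rw [this, pre, List.take_append_drop]
    · rw [List.isChain_cons_cons]
      refine ⟨?_, hch⟩
      apply lt_of_take_lt _ _ q hqu (by omega)
      rw [htk, htk0]; exact h30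

theorem div_of_chain (W : List α) (n q : ℕ) (hn : 0 < n) (hq : 0 < q) (f : ℕ → ℕ)
    (h1 : ∀ j < n - 1, f j + q ≤ f (j + 1)) (h2 : f (n - 1) + q ≤ W.length)
    (h3 : ∀ j < n - 1, pre W q (f (j + 1)) < pre W q (f j)) : IsNDivisible n W := by
  obtain ⟨u, us, hl, hne, hfl, hch, -, -⟩ := div_aux W q hq (n - 1) f h1 h2 h3
  refine ⟨W.take (f 0), u :: us, by simp [hl]; omega, hne, ?_, hch⟩
  rw [← hfl, List.take_append_drop]

theorem pow_aux (X : List α) (p q : ℕ) (hX : p + q ≤ X.length)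
    (h : X.take q = (X.drop p).take q) (e : ℕ) : e * p ≤ q →
    (List.replicate (e + 1) (X.take p)).flatten <+: X := by
  induction e with
  | zero => intro _; simpa using List.take_prefix p X
  | succ e ih =>
    intro he
    have he' : (e + 1) * p = e * p + p := by ring
    have h1 := ih (by omega)
    have hlen : ((List.replicate (e + 1) (X.take p)).flatten).length = (e + 1) * p := by
      have hp : min p X.length = p := by omega
      simp [hp]
    have h2 := List.prefix_iff_eq_take.1 h1
    rw [hlen] at h2
    have h3 : X.take ((e + 1) * p) = (X.drop p).take ((e + 1) * p) := by
      have := congrArg (List.take ((e + 1) * p)) h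
      rwa [List.take_take, List.take_take, min_eq_left he] at this
    rw [List.replicate_succ, List.flatten_cons, h2, h3]
    conv_rhs => rw [← List.take_append_drop p X]
    exact (List.prefix_append_right_inj _).2 (List.take_prefix _ _)

theorem pow_of_period (W : List α) (d p q i : ℕ) (hd : 0 < d) (hp : 0 < p)
    (hq : (d - 1) * p ≤ q) (hW : i + p + q ≤ W.length) (h : pre W q i = pre W q (i + p)) :
    ∃ u : List α, u ≠ [] ∧ (List.replicate d u).flatten <:+: W := by
  have h1 := pow_aux (W.drop i) p q (by simp; omega)
    (by simpa [pre, List.drop_drop] using h) (d - 1) hq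
  rw [Nat.sub_add_cancel hd] at h1
  refine ⟨(W.drop i).take p, ?_, h1.isInfix.trans (List.drop_suffix i W).isInfix⟩
  apply List.ne_nil_of_length_pos
  simp; omega

theorem occ (W : List α) (n d M : ℕ) (hn : 0 < n) (hd : 0 < d) (hM : n * d ≤ M) (p : ℕ → ℕ)
    (hgap : ∀ j < n - 1, p j + M ≤ p (j + 1)) (hend : p (n - 1) + M ≤ W.length)
    (V : List α) (hV : ∀ j < n, pre W M (p j) = V)
    (hpow : ¬ ∃ u : List α, u ≠ [] ∧ (List.replicate d u).flatten <:+: W) :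
    IsNDivisible n W := by
  have hnd : n * d = (n - 1) * (d - 1) + (n - 1) + d := by
    obtain ⟨n, rfl⟩ := Nat.exists_eq_succ_of_ne_zero hn.ne'
    obtain ⟨d, rfl⟩ := Nat.exists_eq_succ_of_ne_zero hd.ne'
    simp; ring
  set q := M - (n - 1) with hq
  have hinj : ∀ b < n, ∀ c < n, b < c → pre V q b ≠ pre V q c := by
    intro b hb c hc hbc he
    apply hpow
    have hV' := hV (n - 1) (by omega)
    rw [← hV', pre_pre _ _ _ _ _ (by omega), pre_pre _ _ _ _ _ (by omega)] at he
    refine pow_of_period W d (c - b) q (p (n - 1) + b) hd (by omega) ?_ (by omega) ?_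
    · have : (d - 1) * (c - b) ≤ (d - 1) * (n - 1) := Nat.mul_le_mul_left _ (by omega)
      have h2 : (d - 1) * (n - 1) = (n - 1) * (d - 1) := mul_comm _ _
      omega
    · rw [he]; congr 1; omega
  have hcard : ((Finset.range n).image (pre V q)).card = n := by
    rw [Finset.card_image_of_injOn, Finset.card_range]
    intro b hb c hc he
    simp only [Finset.coe_range, Set.mem_Iio] at hb hc
    rcases lt_trichotomy b c with h | h | h
    · exact absurd he (hinj b hb c hc h)
    · exact h
    · exact absurd he.symm (hinj c hc b hb h)
  have hex : ∀ j : ℕ, ∃ b < n, ∀ hj : j < n, pre V q b =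
      ((Finset.range n).image (pre V q)).orderEmbOfFin hcard (Fin.rev ⟨j, hj⟩) := by
    intro j
    by_cases hj : j < n
    · have := Finset.orderEmbOfFin_mem _ hcard (Fin.rev ⟨j, hj⟩)
      obtain ⟨b, hb, hbe⟩ := Finset.mem_image.1 this
      exact ⟨b, Finset.mem_range.1 hb, fun _ => hbe⟩
    · exact ⟨0, hn, fun h => absurd h hj⟩
  choose b hb hbe using hex
  have hpb : ∀ j < n, pre W q (p j + b j) = pre V q (b j) := by
    intro j hj
    have := hb j
    rw [← hV j hj, pre_pre _ _ _ _ _ (by omega)]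
  apply div_of_chain W n q hn (by omega) (fun j => p j + b j)
  · intro j hj
    have := hb j
    have := hgap j hj
    omega
  · have := hb (n - 1)
    omega
  · intro j hj
    rw [hpb j (by omega), hpb (j + 1) (by omega), hbe j (by omega), hbe (j + 1) (by omega)]
    apply (OrderEmbedding.lt_iff_lt _).2
    rw [Fin.rev_lt_rev]
    simp

/-- there is a chain of length `m` ending in `k` -/
def Ch (R : ℕ → ℕ → Prop) : ℕ → ℕ → Prop
  | 0, _ => True
  | m + 1, k => ∃ i, R i k ∧ Ch R m i

theorem Ch_exists (R : ℕ → ℕ → Prop) (m : ℕ) : ∀ k, Ch R m k →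
    ∃ f : ℕ → ℕ, f m = k ∧ ∀ j < m, R (f j) (f (j + 1)) := by
  induction m with
  | zero => intro k _; exact ⟨fun _ => k, rfl, by simp⟩
  | succ m ih =>
    rintro k ⟨i, hi, hc⟩
    obtain ⟨f, hf, hR⟩ := ih i hc
    refine ⟨fun j => if j ≤ m then f j else k, by simp, ?_⟩
    intro j hj
    have hj' : j ≤ m := by omega
    simp only [hj', if_true]
    by_cases hjm : j + 1 ≤ m
    · simp only [hjm, if_true]; exact hR j (by omega)
    · have : j = m := by omega
      subst this
      simpa [hf] using hi

theorem exists_height (R : ℕ → ℕ → Prop) (n : ℕ) (hn : 0 < n)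
    (hR : ¬ ∃ k, (∃ i, R i k) ∧ Ch R n k) :
    ∃ h : ℕ → ℕ, (∀ k, h k < n) ∧ ∀ i k, R i k → h i < h k := by
  classical
  have hR' : ∀ k, ¬ Ch R n k := by
    intro k hk
    apply hR
    refine ⟨k, ?_, hk⟩
    obtain ⟨n, rfl⟩ := Nat.exists_eq_succ_of_ne_zero hn.ne'
    obtain ⟨i, hi, _⟩ := hk
    exact ⟨i, hi⟩
  have hlt : ∀ k, Nat.findGreatest (fun m => Ch R m k) n < n := by
    intro k
    refine lt_of_le_of_ne (Nat.findGreatest_le n) ?_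
    intro he
    have := Nat.findGreatest_spec (P := fun m => Ch R m k) (n := n) (m := 0) (Nat.zero_le _) trivial
    rw [he] at this
    exact hR' k this
  refine ⟨fun k => Nat.findGreatest (fun m => Ch R m k) n, hlt, ?_⟩
  intro i k hik
  have h1 := Nat.findGreatest_spec (P := fun m => Ch R m i) (n := n) (m := 0) (Nat.zero_le _) trivial
  exact Nat.le_findGreatest (P := fun m => Ch R m k) (hlt i) ⟨i, hik, h1⟩

theorem height (W : List α) (n q : ℕ) (hn : 2 ≤ n) (hq : 0 < q) (hdiv : ¬ IsNDivisible n W) :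
    ∃ h : ℕ → ℕ, (∀ k, h k < n - 1) ∧ ∀ i k, i < k → k + q ≤ W.length → i % q = k % q →
      h i = h k → pre W q i ≤ pre W q k := by
  obtain ⟨h, h1, h2⟩ := exists_height (fun i k => i < k ∧ k + q ≤ W.length ∧ i % q = k % q ∧
    pre W q k < pre W q i) (n - 1) (by omega) (by
      rintro ⟨k, ⟨i, hi⟩, hc⟩
      apply hdiv
      obtain ⟨f, hf, hR⟩ := Ch_exists _ _ _ hc
      apply div_of_chain W n q (by omega) hq f
      · intro j hj
        obtain ⟨ha, hb, hc, hd⟩ := hR j hj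
        have := (Nat.modEq_iff_dvd' ha.le).1 hc
        have := Nat.le_of_dvd (by omega) this
        omega
      · rw [hf]; exact hi.2.1
      · intro j hj
        exact (hR j hj).2.2.2)
  refine ⟨h, h1, ?_⟩
  intro i k hik hk hr he
  by_contra hcon
  have := h2 i k ⟨hik, hk, hr, not_le.1 hcon⟩
  omega

/-- few words of length `q` per residue class in the interval -/
def Good (W : List α) (n q s N : ℕ) : Prop :=
  ∀ r, (((Finset.Ico s (s + N)).filter (fun i => i % q = r)).image (pre W q)).card ≤ n - 1

theorem block (W : List α) (n q s N F : ℕ) (hn : 2 ≤ n) (hq : 0 < q) (hdiv : ¬ IsNDivisible n W)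
    (hs : s + F * N + q ≤ W.length) {γ : Type*} [DecidableEq γ] (K : Finset γ) (lab : ℕ → γ)
    (hK : ∀ k, s ≤ k → k < s + F * N → lab k ∈ K)
    (hlab : ∀ i k, s ≤ i → i < s + F * N → s ≤ k → k < s + F * N →
      lab i = lab k → i % q = k % q ∧ pre W q i = pre W q k)
    (hF : (n - 1) * K.card < F) :
    ∃ s', s ≤ s' ∧ s' + N ≤ s + F * N ∧ Good W n q s' N := by
  classical
  obtain ⟨h, h1, h2⟩ := height W n q hn hq hdiv
  have key : ∃ b < F, ∀ i k, i < k → s + b * N ≤ i → k < s + b * N + N → i % q = k % q →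
      h i = h k → pre W q i = pre W q k := by
    by_contra hcon
    push Not at hcon
    have hcon' : ∀ b, ∃ i k, b < F → (i < k ∧ s + b * N ≤ i ∧ k < s + b * N + N ∧ i % q = k % q ∧
        h i = h k ∧ pre W q i ≠ pre W q k) := by
      intro b
      by_cases hb : b < F
      · obtain ⟨i, k, hh⟩ := hcon b hb
        exact ⟨i, k, fun _ => hh⟩
      · exact ⟨0, 0, fun h => absurd h hb⟩
    choose i k hik using hcon'
    have hbN : ∀ b c, b < c → b * N + N ≤ c * N := by
      intro b c hbc
      have := Nat.mul_le_mul_right N (Nat.succ_le_of_lt hbc)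
      rw [Nat.succ_mul] at this; exact this
    have hrange : ∀ b < F, s ≤ k b ∧ k b < s + F * N := by
      intro b hb
      have := hik b hb
      have := hbN b F hb
      constructor <;> omega
    obtain ⟨b, hb, c, hc, hne, he⟩ := Finset.exists_ne_map_eq_of_card_lt_of_maps_to
      (s := Finset.range F) (t := Finset.range (n - 1) ×ˢ K) (by simpa using hF)
      (f := fun b => (h (k b), lab (k b))) (by
        intro b hb
        have hb' : b < F := by simpa using hb
        have := hrange b hb'
        simp only [Finset.coe_product, Set.mem_prod, Finset.mem_coe, Finset.mem_range]
        exact ⟨h1 _, hK _ this.1 this.2⟩)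
    have main : ∀ b c, b < F → c < F → b < c → (h (k b), lab (k b)) = (h (k c), lab (k c)) →
        False := by
      intro b c hb hc hbc he
      obtain ⟨a1, a2, a3, a4, a5, a6⟩ := hik b hb
      obtain ⟨c1, c2, c3, c4, c5, c6⟩ := hik c hc
      have hr := hrange b hb
      have hr' := hrange c hc
      have hbc' := hbN b c hbc
      simp only [Prod.mk.injEq] at he
      obtain ⟨e1, e2⟩ := he
      obtain ⟨e3, e4⟩ := hlab _ _ hr.1 hr.2 hr'.1 hr'.2 e2
      have x1 := h2 (k b) (i c) (by omega) (by omega) (by omega) (by omega)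
      have x2 := h2 (i c) (k c) c1 (by omega) c4 c5
      rw [e4] at x1
      exact c6 (le_antisymm x2 x1)
    have hb' : b < F := by simpa using hb
    have hc' : c < F := by simpa using hc
    rcases lt_or_gt_of_ne hne with hlt | hlt
    · exact main b c hb' hc' hlt he
    · exact main c b hc' hb' hlt he.symm
  obtain ⟨b, hb, hkey⟩ := key
  refine ⟨s + b * N, by omega, ?_, ?_⟩
  · have := Nat.mul_le_mul_right N (Nat.succ_le_of_lt hb)
    rw [Nat.succ_mul] at this; omega
  · intro r
    set P := (Finset.Ico (s + b * N) (s + b * N + N)).filter (fun i => i % q = r) with hP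
    have hPk : ∀ i ∈ P, ∀ k ∈ P, h i = h k → pre W q i = pre W q k := by
      intro i hi k hk he
      simp only [hP, Finset.mem_filter, Finset.mem_Ico] at hi hk
      rcases lt_trichotomy i k with hlt | hlt | hlt
      · exact hkey i k hlt hi.1.1 hk.1.2 (by omega) he
      · rw [hlt]
      · exact (hkey k i hlt hk.1.1 hi.1.2 (by omega) he.symm).symm
    have hc1 : (P.image (pre W q)).card ≤ (Finset.range (n - 1)).card := by
      have hch : ∀ w ∈ P.image (pre W q), ∃ i ∈ P, pre W q i = w := by
        intro w hw; exact Finset.mem_image.1 hw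
      choose! g hg1 hg2 using hch
      apply Finset.card_le_card_of_injOn (fun w => h (g w))
      · intro w hw
        simpa using h1 _
      · intro w hw w' hw' he
        rw [← hg2 w hw, ← hg2 w' hw']
        exact hPk _ (hg1 w hw) _ (hg1 w' hw') he
    simpa using hc1

theorem step (W : List α) (n a s N N' : ℕ) (hn : 2 ≤ n) (ha : 0 < a) (hdiv : ¬ IsNDivisible n W)
    (hs : s + N + 2 * a ≤ W.length) (hg : Good W n a s N)
    (hN' : a ≤ N') (hN : 2 * a * n ^ 3 * N' ≤ N) :
    ∃ s', s ≤ s' ∧ s' + N' ≤ s + N ∧ Good W n (2 * a) s' N' := by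
  classical
  set A : ℕ → Finset (List α) := fun r =>
    ((Finset.Ico s (s + N)).filter (fun i => i % a = r)).image (pre W a) with hA
  set K : Finset (ℕ × List α × List α) :=
    (Finset.range (2 * a)).biUnion (fun r => {r} ×ˢ (A (r % a) ×ˢ A (r % a))) with hK
  have hKc : K.card ≤ 2 * a * ((n - 1) * (n - 1)) := by
    have := Finset.card_biUnion_le_card_mul (Finset.range (2 * a))
      (fun r => ({r} : Finset ℕ) ×ˢ (A (r % a) ×ˢ A (r % a))) ((n - 1) * (n - 1)) (by
        intro r _
        simp only [Finset.card_product, Finset.card_singleton, one_mul]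
        exact Nat.mul_le_mul (hg _) (hg _))
    rw [Finset.card_range] at this
    exact this
  obtain ⟨m, rfl⟩ : ∃ m, n = m + 1 := ⟨n - 1, by omega⟩
  simp only [Nat.add_sub_cancel] at hKc
  set F := 2 * a * m ^ 3 + 1 with hF
  have hFN : F * N' + a ≤ N := by
    refine le_trans ?_ hN
    have : (2 * a * m ^ 3 + 2 * a) * N' ≤ 2 * a * (m + 1) ^ 3 * N' := by
      apply Nat.mul_le_mul_right
      have : m ^ 3 + 1 ≤ (m + 1) ^ 3 := by ring_nf; omega
      calc 2 * a * m ^ 3 + 2 * a = 2 * a * (m ^ 3 + 1) := by ring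
        _ ≤ _ := Nat.mul_le_mul_left _ this
    refine le_trans ?_ this
    rw [hF]
    nlinarith [Nat.zero_le (2 * a * m ^ 3 * N')]
  obtain ⟨s', h1, h2, h3⟩ := block W (m + 1) (2 * a) s N' F hn (by omega) hdiv (by omega) K
    (fun k => (k % (2 * a), pre W a k, pre W a (k + a))) (by
      intro k hk1 hk2
      simp only [hK, Finset.mem_biUnion, Finset.mem_range, Finset.mem_product,
        Finset.mem_singleton, hA, Finset.mem_image, Finset.mem_filter, Finset.mem_Ico]
      refine ⟨k % (2 * a), Nat.mod_lt _ (by omega), rfl, ⟨k, ⟨⟨hk1, by omega⟩, ?_⟩, rfl⟩,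
        ⟨k + a, ⟨⟨by omega, by omega⟩, ?_⟩, rfl⟩⟩
      · exact (Nat.mod_mod_of_dvd k (Dvd.intro_left 2 rfl)).symm
      · rw [Nat.add_mod_right]; exact (Nat.mod_mod_of_dvd k (Dvd.intro_left 2 rfl)).symm) (by
      intro i k _ _ _ _ he
      simp only [Prod.mk.injEq] at he
      refine ⟨he.1, ?_⟩
      rw [two_mul, pre_add, pre_add, he.2.1, he.2.2]) (by
      simp only [Nat.add_sub_cancel]
      have := Nat.mul_le_mul_left m hKc
      have e : m * (2 * a * (m * m)) = 2 * a * m ^ 3 := by ring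
      omega)
  exact ⟨s', h1, by omega, h3⟩

theorem base {l : ℕ} (W : List (Fin l)) (n N : ℕ) (hl : 0 < l) (hn : 2 ≤ n)
    (hdiv : ¬ IsNDivisible n W) (hs : n * l * N + 1 ≤ W.length) :
    ∃ s, s + N ≤ n * l * N ∧ Good W n 1 s N := by
  classical
  obtain ⟨s', h1, h2, h3⟩ := block W n 1 0 N (n * l) hn (by omega) hdiv (by omega)
    (Finset.univ.image (fun x : Fin l => [x])) (fun k => pre W 1 k) (by
      intro k _ hk
      have := pre_length W 1 k (by omega)
      obtain ⟨x, hx⟩ := List.length_eq_one_iff.1 this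
      rw [hx]
      simp) (by
      intro i k _ _ _ _ he
      exact ⟨by omega, he⟩) (by
      have : (Finset.univ.image (fun x : Fin l => [x])).card ≤ l := by
        simpa using Finset.card_image_le (s := Finset.univ) (f := fun x : Fin l => [x])
      calc _ ≤ (n - 1) * l := Nat.mul_le_mul_left _ this
        _ < n * l := Nat.mul_lt_mul_of_pos_right (by omega) hl)
  exact ⟨s', by omega, h3⟩

theorem final (W : List α) (n d M s N : ℕ) (hn : 2 ≤ n) (hd : 0 < d) (hM : n * d ≤ M)
    (hs : s + N + M ≤ W.length) (hg : Good W n M s N) (hN : n ^ 2 * M ≤ N)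
    (hdiv : ¬ IsNDivisible n W)
    (hpow : ¬ ∃ u : List α, u ≠ [] ∧ (List.replicate d u).flatten <:+: W) : False := by
  classical
  have hM0 : 0 < M := lt_of_lt_of_le (Nat.mul_pos (by omega) hd) hM
  have hmem : ∀ t < n ^ 2, s + t * M < s + N := by
    intro t ht
    have := Nat.mul_lt_mul_of_pos_right ht hM0
    omega
  obtain ⟨V, hV, hc⟩ := Finset.exists_lt_card_fiber_of_mul_lt_card_of_maps_to
    (s := Finset.range (n ^ 2))
    (t := ((Finset.Ico s (s + N)).filter (fun i => i % M = s % M)).image (pre W M))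
    (f := fun t => pre W M (s + t * M)) (n := n - 1) (by
      intro t ht
      have ht' := hmem t (by simpa using ht)
      apply Finset.mem_coe.2
      apply Finset.mem_image_of_mem
      simp only [Finset.mem_filter, Finset.mem_Ico]
      refine ⟨⟨by omega, ht'⟩, ?_⟩
      simp) (by
      refine lt_of_le_of_lt (Nat.mul_le_mul_right _ (hg (s % M))) ?_
      rw [Finset.card_range, pow_two]
      exact Nat.mul_lt_mul_of_lt_of_lt (by omega) (by omega))
  set T := (Finset.range (n ^ 2)).filter (fun t => pre W M (s + t * M) = V) with hT
  have hTc : n ≤ T.card := by omega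
  set e := T.orderEmbOfCardLe hTc
  have he : ∀ j, e j ∈ T := fun j => Finset.orderEmbOfCardLe_mem T hTc j
  have hpt : ∀ j (hj : j < n), s + (if hj : j < n then e ⟨j, hj⟩ else 0) * M =
      s + e ⟨j, hj⟩ * M := by
    intro j hj; simp [hj]
  have hall : ∀ j, e j < n ^ 2 ∧ pre W M (s + e j * M) = V := by
    intro j
    have := he j
    simpa only [hT, Finset.mem_filter, Finset.mem_range] using this
  apply hdiv
  apply occ W n d M (by omega) hd hM (fun j => s + (if hj : j < n then e ⟨j, hj⟩ else 0) * M)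
    _ _ V _ hpow
  · intro j hj
    rw [hpt j (by omega), hpt (j + 1) (by omega)]
    have : e ⟨j, by omega⟩ < e ⟨j + 1, by omega⟩ := (OrderEmbedding.lt_iff_lt _).2 (by simp)
    have := Nat.mul_le_mul_right M (Nat.succ_le_of_lt this)
    rw [Nat.succ_mul] at this
    omega
  · rw [hpt (n - 1) (by omega)]
    have := hmem _ (hall ⟨n - 1, by omega⟩).1
    omega
  · intro j hj
    rw [hpt j hj]
    exact (hall ⟨j, hj⟩).2

/-- thresholds -/
def Th (n J j : ℕ) : ℕ := (∏ i ∈ Finset.Ico j J, (2 * 2 ^ i * n ^ 3)) * (n ^ 2 * 2 ^ J)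

theorem combi {l : ℕ} (W : List (Fin l)) (n d J : ℕ) (hl : 0 < l) (hn : 2 ≤ n) (hd : 0 < d)
    (hJ : n * d ≤ 2 ^ J) (hW : n * l * Th n J 0 + 2 ^ J ≤ W.length)
    (hdiv : ¬ IsNDivisible n W)
    (hpow : ¬ ∃ u : List (Fin l), u ≠ [] ∧ (List.replicate d u).flatten <:+: W) : False := by
  have key : ∀ j ≤ J, ∃ s, s + Th n J j ≤ n * l * Th n J 0 ∧ Good W n (2 ^ j) s (Th n J j) := by
    intro j
    induction j with
    | zero =>
      intro _
      have := Nat.one_le_two_pow (n := J)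
      simpa using base W n (Th n J 0) hl hn hdiv (by omega)
    | succ j ih =>
      intro hj
      obtain ⟨s, h1, h2⟩ := ih (by omega)
      have hpw : 2 * 2 ^ j ≤ 2 ^ J := by
        rw [← pow_succ']; exact Nat.pow_le_pow_right (by omega) hj
      obtain ⟨s', h3, h4, h5⟩ := step W n (2 ^ j) s (Th n J j) (Th n J (j + 1)) hn (by positivity)
        hdiv (by omega) h2 (by
          unfold Th
          have a1 : 1 ≤ ∏ i ∈ Finset.Ico (j + 1) J, (2 * 2 ^ i * n ^ 3) := by
            apply Nat.succ_le_of_lt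
            apply Finset.prod_pos
            intro i _; positivity
          have a2 : 1 ≤ n ^ 2 := Nat.one_le_pow _ _ (by omega)
          calc 2 ^ j ≤ 1 * (1 * 2 ^ J) := by omega
            _ ≤ _ := Nat.mul_le_mul a1 (Nat.mul_le_mul_right _ a2)) (by
          unfold Th
          rw [Finset.prod_eq_prod_Ico_succ_bot (by omega : j < J)]
          exact le_of_eq (by ring))
      exact ⟨s', by omega, by rw [pow_succ']; exact h5⟩
  obtain ⟨s, h1, h2⟩ := key J le_rfl
  have e : Th n J J = n ^ 2 * 2 ^ J := by simp [Th]
  exact final W n d (2 ^ J) s (Th n J J) hn hd hJ (by omega) h2 e.ge hdiv hpow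

theorem Th_sq (n J : ℕ) : (Th n J 0) ^ 2 = 2 ^ (J * (J + 3)) * n ^ (6 * J + 4) := by
  have : (∏ i ∈ Finset.range J, (2 * 2 ^ i * n ^ 3)) ^ 2 = 2 ^ (J * (J + 1)) * n ^ (6 * J) := by
    induction J with
    | zero => simp
    | succ J ih =>
      rw [Finset.prod_range_succ, mul_pow, ih]
      ring
  rw [Th, ← Finset.range_eq_Ico, mul_pow, this]
  ring

end aux

/-- Theorem: every word over an `l`-letter alphabet of length at least
`256 · l · (nd)^(2·log₂(nd)+10) · d²` contains a `d`-th power of a nonempty word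
or is `n`-divisible. -/
theorem stmt_10 (l n d : ℕ) (hl : 0 < l) (hn : 2 ≤ n) (hd : n ≤ d)
    (W : List (Fin l))
    (hlen : (256 : ℝ) * l *
        ((n * d : ℕ) : ℝ) ^ (2 * Real.logb 2 ((n * d : ℕ) : ℝ) + 10) *
        (d : ℝ) ^ 2 ≤ (W.length : ℝ)) :
    (∃ u : List (Fin l), u ≠ [] ∧ (List.replicate d u).flatten <:+: W) ∨
      IsNDivisible n W := by
  by_contra hcon
  push Not at hcon
  obtain ⟨hpow, hdiv⟩ := hcon
  have hpow' : ¬ ∃ u : List (Fin l), u ≠ [] ∧ (List.replicate d u).flatten <:+: W := by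
    rintro ⟨u, h1, h2⟩; exact hpow u h1 h2
  set x := n * d with hx
  have hx4 : 4 ≤ x := by nlinarith
  have hnx : n ^ 2 ≤ x := by nlinarith
  set J := Nat.clog 2 x with hJ
  have hJ1 : x ≤ 2 ^ J := Nat.le_pow_clog (by norm_num) x
  have hJ0 : 0 < J := Nat.clog_pos (by norm_num) (by omega)
  have hJ2 : 2 ^ (J - 1) < x := Nat.pow_pred_clog_lt_self (by norm_num) (by omega)
  set L := Real.logb 2 (x : ℝ) with hL
  have hxpos : (0 : ℝ) < x := by positivity
  have hxL : (x : ℝ) = (2 : ℝ) ^ L := (Real.rpow_logb (by norm_num) (by norm_num) hxpos).symm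
  have hJL : (J : ℝ) ≤ L + 1 := by
    have h1 : ((2 : ℝ) ^ ((J - 1 : ℕ) : ℝ)) ≤ 2 ^ L := by
      rw [← hxL, Real.rpow_natCast]; exact_mod_cast hJ2.le
    have h2 := (Real.rpow_le_rpow_left_iff (by norm_num)).1 h1
    rw [Nat.cast_sub hJ0] at h2
    push_cast at h2; linarith
  have hL1 : 1 ≤ L := by
    rw [hL, Real.le_logb_iff_rpow_le (by norm_num) hxpos, Real.rpow_one]
    exact_mod_cast (by omega : 2 ≤ x)
  have hsq : (n * Th n J 0) ^ 2 ≤ 2 ^ (J * (J + 3)) * x ^ (3 * J + 3) := by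
    rw [mul_pow, Th_sq]
    calc n ^ 2 * (2 ^ (J * (J + 3)) * n ^ (6 * J + 4))
        = 2 ^ (J * (J + 3)) * (n ^ 2) ^ (3 * J + 3) := by rw [← pow_mul]; ring
      _ ≤ _ := Nat.mul_le_mul_left _ (Nat.pow_le_pow_left hnx _)
  have hJr : (0 : ℝ) ≤ J := Nat.cast_nonneg _
  have hreal : ((n * Th n J 0 : ℕ) : ℝ) ≤ (x : ℝ) ^ (2 * L + 10) := by
    refine (sq_le_sq₀ (by positivity) (by positivity)).1 ?_
    calc ((n * Th n J 0 : ℕ) : ℝ) ^ 2 ≤ (2 : ℝ) ^ (J * (J + 3)) * (x : ℝ) ^ (3 * J + 3) := by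
          exact_mod_cast hsq
      _ = (2 : ℝ) ^ ((J : ℝ) * (J + 3) + L * (3 * J + 3)) := by
          rw [Real.rpow_add (by norm_num), Real.rpow_mul (by norm_num) L, ← hxL,
            ← Real.rpow_natCast, ← Real.rpow_natCast]
          push_cast; rfl
      _ ≤ (2 : ℝ) ^ (L * (2 * L + 10) * 2) := by
          apply Real.rpow_le_rpow_of_exponent_le (by norm_num)
          nlinarith
      _ = ((x : ℝ) ^ (2 * L + 10)) ^ 2 := by
          rw [Real.rpow_mul (by norm_num), Real.rpow_mul (by norm_num) L, ← hxL]
          norm_num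
  have hThJ : 2 ^ J ≤ n * l * Th n J 0 := by
    unfold Th
    have a1 : 1 ≤ ∏ i ∈ Finset.Ico 0 J, (2 * 2 ^ i * n ^ 3) := by
      apply Nat.succ_le_of_lt
      apply Finset.prod_pos
      intro i _; positivity
    have a2 : 1 ≤ n ^ 2 := Nat.one_le_pow _ _ (by omega)
    have a3 : 1 ≤ n * l := Nat.mul_pos (by omega) hl
    calc 2 ^ J = 1 * (1 * (1 * 2 ^ J)) := by ring
      _ ≤ _ := Nat.mul_le_mul a3 (Nat.mul_le_mul a1 (Nat.mul_le_mul_right _ a2))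
  refine combi W n d J hl hn (by omega) hJ1 ?_ hdiv hpow'
  refine le_trans (Nat.add_le_add_left hThJ _) ?_
  have hfin : ((n * l * Th n J 0 + n * l * Th n J 0 : ℕ) : ℝ) ≤ W.length := by
    refine le_trans ?_ hlen
    have hd1 : (1 : ℝ) ≤ (d : ℝ) ^ 2 := one_le_pow₀ (by exact_mod_cast (by omega : 1 ≤ d))
    have hl0 : (0 : ℝ) ≤ l := Nat.cast_nonneg _
    have hy : (0 : ℝ) ≤ (x : ℝ) ^ (2 * L + 10) := by positivity
    calc ((n * l * Th n J 0 + n * l * Th n J 0 : ℕ) : ℝ) = 2 * l * ((n * Th n J 0 : ℕ) : ℝ) := by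
          push_cast; ring
      _ ≤ 2 * l * (x : ℝ) ^ (2 * L + 10) := by gcongr
      _ ≤ 256 * l * (x : ℝ) ^ (2 * L + 10) := by gcongr; norm_num
      _ ≤ 256 * l * (x : ℝ) ^ (2 * L + 10) * (d : ℝ) ^ 2 := le_mul_of_one_le_right (by positivity) hd1
  exact_mod_cast hfin
end

section
/- Let l and d be positive integers, and let A be an associative algebra generated by l elements over a field, satisfying the identity x^d = 0 (every element of A is nilpotent of index at most d). Then A is nilpotent of index less than Ψ(d,d,l) = 2^{18} · l · (d^2)^{3·log_3(d^2)+13} · d^2; that is, every product of at least Ψ(d,d,l) generators vanishes. -/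
open Finset

def BKfac {α : Type*} (w : ℕ → α) (i k : ℕ) : List α := (List.range k).map (fun j => w (i + j))

theorem BKfac_length {α : Type*} (w : ℕ → α) (i k : ℕ) : (BKfac w i k).length = k := by
  simp [BKfac]

theorem BKfac_add {α : Type*} (w : ℕ → α) (i a b : ℕ) :
    BKfac w i (a + b) = BKfac w i a ++ BKfac w (i + a) b := by
  simp [BKfac, List.range_add, Function.comp_def, add_assoc]

theorem BKfac_eq {α : Type*} (w : ℕ → α) {i i' k : ℕ} (h : BKfac w i k = BKfac w i' k) :
    ∀ j < k, w (i + j) = w (i' + j) := by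
  intro j hj
  simp only [BKfac, List.map_inj_left, List.mem_range] at h
  exact h j hj

theorem BKfac_congr {α : Type*} (w : ℕ → α) {i i' k : ℕ} (h : ∀ j < k, w (i + j) = w (i' + j)) :
    BKfac w i k = BKfac w i' k := by
  simp only [BKfac, List.map_inj_left, List.mem_range]
  exact h

def BKCh {β : Type*} [LinearOrder β] (S : ℕ → Finset β) (q : ℕ) : ℕ → ℕ → β → Prop
  | 0, g, x => g < q ∧ x ∈ S g
  | j + 1, g, x => x ∈ S g ∧ g < q ∧ ∃ g' y, g < g' ∧ y < x ∧ BKCh S q j g' y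

theorem BK_abstract {β : Type*} [LinearOrder β] (S : ℕ → Finset β) (F : Finset β) (q n : ℕ)
    (hF : ∀ g < q, S g ⊆ F) (hn : ∀ g < q, n + 1 ≤ (S g).card) (hq : n * F.card < q) :
    ∃ g x, BKCh S q n g x := by
  classical
  by_contra hno
  push Not at hno
  let h : ℕ → β → ℕ := fun g x => Nat.findGreatest (fun j => BKCh S q j g x) n
  have hspec : ∀ g < q, ∀ x ∈ S g, BKCh S q (h g x) g x := by
    intro g hg x hx
    exact Nat.findGreatest_spec (P := fun j => BKCh S q j g x) (Nat.zero_le n) ⟨hg, hx⟩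
  have hlt : ∀ g < q, ∀ x ∈ S g, h g x < n := by
    intro g hg x hx
    refine lt_of_le_of_ne (Nat.findGreatest_le n) ?_
    intro he
    have := hspec g hg x hx
    rw [he] at this
    exact hno g x this
  have hpair : ∀ g < q, ∃ x y, x ∈ S g ∧ y ∈ S g ∧ x < y ∧ h g x = h g y := by
    intro g hg
    have := Finset.exists_ne_map_eq_of_card_lt_of_maps_to (s := S g) (t := Finset.range n)
      (f := h g) (by simpa using hn g hg) (by
        intro x hx; simpa using hlt g hg x hx)
    obtain ⟨x, hx, y, hy, hne, he⟩ := this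
    rcases lt_or_gt_of_ne hne with hl | hl
    · exact ⟨x, y, hx, hy, hl, he⟩
    · exact ⟨y, x, hy, hx, hl, he.symm⟩
  have : Nonempty β := ⟨(hpair 0 (by omega)).choose⟩
  choose! X Y hX hY hXY hE using hpair
  have key : ∀ g g', g < g' → g' < q → h g (Y g) = h g' (Y g') → Y g < Y g' := by
    intro g g' hgg hg' he
    have hg : g < q := hgg.trans hg'
    refine lt_of_le_of_lt ?_ (hXY g' hg')
    by_contra hcon
    push Not at hcon
    have h1 : BKCh S q (h g' (X g') + 1) g (Y g) :=
      ⟨hY g hg, hg, g', X g', hgg, hcon, hspec g' hg' _ (hX g' hg')⟩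
    have h2 : h g' (X g') + 1 ≤ h g (Y g) :=
      Nat.le_findGreatest (hlt g' hg' _ (hX g' hg')) h1
    have := hE g' hg'
    omega
  have hcard : (Finset.range q).card ≤ (Finset.range n ×ˢ F).card := by
    refine Finset.card_le_card_of_injOn (fun g => (h g (Y g), Y g)) ?_ ?_
    · intro g hg
      have hg : g < q := by simpa using hg
      simp only [Finset.coe_product, Set.mem_prod, Finset.mem_coe, Finset.mem_range]
      exact ⟨hlt g hg _ (hY g hg), hF g hg (hY g hg)⟩
    · intro g hg g' hg' he
      have hg : g < q := by simpa using hg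
      have hg' : g' < q := by simpa using hg'
      simp only [Prod.mk.injEq] at he
      rcases lt_trichotomy g g' with hl | hl | hl
      · exact absurd he.2 (key g g' hl hg' he.1).ne
      · exact hl
      · exact absurd he.2.symm (key g' g hl hg he.1.symm).ne
  simp at hcard
  omega

def BKPC {α : Type*} [LinearOrder α] (w : ℕ → α) (k N : ℕ) : ℕ → ℕ → Prop
  | 0, i => i + k ≤ N
  | j + 1, i => ∃ i', i + k ≤ i' ∧ BKfac w i' k < BKfac w i k ∧ BKPC w k N j i'

theorem BK_step {α : Type*} [LinearOrder α] (w : ℕ → α) (k N n q : ℕ)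
    (hno : ∀ i, ¬ BKPC w k N n i) (P : ℕ → Finset ℕ) (F : Finset (List α))
    (hP : ∀ g g', g < g' → g' < q → ∀ i ∈ P g, ∀ i' ∈ P g', i + k ≤ i')
    (hN : ∀ g < q, ∀ i ∈ P g, i + k ≤ N)
    (hF : ∀ g < q, ∀ i ∈ P g, BKfac w i k ∈ F)
    (hq : n * F.card < q) :
    ∃ g < q, ((P g).image (fun i => BKfac w i k)).card ≤ n := by
  by_contra hcon
  push Not at hcon
  obtain ⟨g, x, hx⟩ := BK_abstract (fun g => (P g).image (fun i => BKfac w i k)) F q n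
    (by
      intro g hg x hx
      obtain ⟨i, hi, rfl⟩ := Finset.mem_image.1 hx
      exact hF g hg i hi) (fun g hg => hcon g hg) hq
  have conv : ∀ j g x, BKCh (fun g => (P g).image (fun i => BKfac w i k)) q j g x →
      g < q ∧ ∃ i ∈ P g, BKfac w i k = x ∧ BKPC w k N j i := by
    intro j
    induction j with
    | zero =>
      rintro g x ⟨hg, hx⟩
      obtain ⟨i, hi, rfl⟩ := Finset.mem_image.1 hx
      exact ⟨hg, i, hi, rfl, hN g hg i hi⟩
    | succ j ih =>
      rintro g x ⟨hx, hg, g', y, hgg, hyx, hc⟩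
      obtain ⟨i, hi, rfl⟩ := Finset.mem_image.1 hx
      obtain ⟨hg', i', hi', rfl, hpc⟩ := ih g' y hc
      exact ⟨hg, i, hi, rfl, i', hP g g' hgg hg' i hi i' hi', hyx, hpc⟩
  obtain ⟨_, i, _, _, hi⟩ := conv n g x hx
  exact hno i hi

/-- region of `m` aligned blocks of size `k` with at most `n` distinct blocks -/
def BKR {α : Type*} (w : ℕ → α) (N n k m : ℕ) : Prop :=
  ∃ b, b + k * m ≤ N ∧ ∃ F : Finset (List α), F.card ≤ n ∧ ∀ t < m, BKfac w (b + k * t) k ∈ F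

theorem BK_aligned {α : Type*} [LinearOrder α] (w : ℕ → α) (k N n q m b : ℕ)
    (hno : ∀ i, ¬ BKPC w k N n i) (hb : b + k * (q * m) ≤ N) (F : Finset (List α))
    (hF : ∀ t < q * m, BKfac w (b + k * t) k ∈ F) (hq : n * F.card < q) :
    BKR w N n k m := by
  have hlt : ∀ g < q, ∀ t < m, g * m + t + 1 ≤ q * m := by
    intro g hg t ht
    have : (g + 1) * m ≤ q * m := Nat.mul_le_mul_right m hg
    rw [add_mul] at this
    omega
  obtain ⟨g, hg, hc⟩ := BK_step w k N n q hno
    (fun g => (Finset.range m).image (fun t => b + k * (g * m + t))) F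
    (by
      intro g g' hgg hg' i hi i' hi'
      simp only [Finset.mem_image, Finset.mem_range] at hi hi'
      obtain ⟨t, ht, rfl⟩ := hi
      obtain ⟨t', ht', rfl⟩ := hi'
      have h1 : (g + 1) * m ≤ g' * m := Nat.mul_le_mul_right m hgg
      rw [add_mul] at h1
      have h2 : k * (g * m + t + 1) ≤ k * (g' * m + t') := Nat.mul_le_mul_left k (by omega)
      rw [mul_add, mul_one] at h2
      omega)
    (by
      intro g hg i hi
      simp only [Finset.mem_image, Finset.mem_range] at hi
      obtain ⟨t, ht, rfl⟩ := hi
      have h2 : k * (g * m + t + 1) ≤ k * (q * m) := Nat.mul_le_mul_left k (hlt g hg t ht)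
      rw [mul_add, mul_one] at h2
      omega)
    (by
      intro g hg i hi
      simp only [Finset.mem_image, Finset.mem_range] at hi
      obtain ⟨t, ht, rfl⟩ := hi
      exact hF _ (hlt g hg t ht)) hq
  refine ⟨b + k * (g * m), ?_, _, hc, ?_⟩
  · have h1 : (g + 1) * m ≤ q * m := Nat.mul_le_mul_right m hg
    have h2 := Nat.mul_le_mul_left k h1
    have h3 : k * ((g + 1) * m) = k * (g * m) + k * m := by ring
    omega
  · intro t ht
    refine Finset.mem_image.2 ⟨b + k * (g * m + t), Finset.mem_image.2 ⟨t, by simpa using ht, rfl⟩, ?_⟩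
    congr 1
    ring

theorem BK_triple {α : Type*} [LinearOrder α] (w : ℕ → α) (k N n q m : ℕ)
    (hno : ∀ k i, ¬ BKPC w k N n i) (h : BKR w N n k (3 * q * m)) (hq : n * (n * n * n) < q) :
    BKR w N n (k * 3) m := by
  obtain ⟨b, hb, F, hFc, hF⟩ := h
  refine BK_aligned w (k * 3) N n q m b (hno _) (by
    have : k * 3 * (q * m) = k * (3 * q * m) := by ring
    omega) ((F ×ˢ F ×ˢ F).image (fun p => p.1 ++ (p.2.1 ++ p.2.2))) ?_ ?_
  · intro t ht
    refine Finset.mem_image.2 ⟨(BKfac w (b + k * (3 * t)) k, BKfac w (b + k * (3 * t + 1)) k,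
      BKfac w (b + k * (3 * t + 2)) k), ?_, ?_⟩
    · have : 3 * q * m = 3 * (q * m) := by ring
      simp only [Finset.mem_product]
      exact ⟨hF _ (by omega), hF _ (by omega), hF _ (by omega)⟩
    · have : k * 3 = k + (k + k) := by ring
      dsimp only
      rw [this, BKfac_add, BKfac_add]
      congr 3 <;> ring
  · refine lt_of_le_of_lt ?_ hq
    refine Nat.mul_le_mul_left n (Finset.card_image_le.trans ?_)
    rw [Finset.card_product, Finset.card_product, mul_assoc]
    gcongr

theorem BK_iter {α : Type*} [LinearOrder α] (w : ℕ → α) (N n q : ℕ)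
    (hno : ∀ k i, ¬ BKPC w k N n i) (hq : n * (n * n * n) < q) (s : ℕ) :
    ∀ m, BKR w N n 1 ((3 * q) ^ s * m) → BKR w N n (3 ^ s) m := by
  induction s with
  | zero => intro m h; simpa using h
  | succ s ih =>
    intro m h
    rw [pow_succ]
    refine BK_triple w (3 ^ s) N n q m hno (ih _ ?_) hq
    convert h using 1
    ring

theorem BK_comb {α : Type*} [LinearOrder α] [Fintype α] (w : ℕ → α) (N n s : ℕ)
    (hs : (n + 1) ^ 2 ≤ 3 ^ s) (hno : ∀ k i, ¬ BKPC w k N n i)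
    (hN : (n + 1) * Fintype.card α * ((3 * (n + 1) ^ 4) ^ s * (2 * (n + 1) ^ 4)) ≤ N)
    (hcard : 0 < Fintype.card α) :
    ∃ i p, 0 < p ∧ i + (n + 1) * p ≤ N ∧ ∀ j < n * p, w (i + j) = w (i + p + j) := by
  set q := (n + 1) ^ 4 with hqdef
  have hq : n * (n * n * n) < q := by rw [hqdef]; ring_nf; omega
  have h0 : BKR w N n 1 ((3 * q) ^ s * (2 * q)) := by
    refine BK_aligned w 1 N n ((n + 1) * Fintype.card α) _ 0 (hno 1) (by simpa using hN)
      (Finset.univ.image (fun a => [a])) ?_ ?_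
    · intro t _
      simp [BKfac]
    · have := (Finset.card_image_le (s := (Finset.univ : Finset α)) (f := fun a => [a]))
      rw [Finset.card_univ] at this
      nlinarith
  obtain ⟨b, hb, F, hFc, hF⟩ := BK_iter w N n q hno hq s _ h0
  set k := 3 ^ s with hk
  have hnk : n + 1 ≤ k := by nlinarith
  obtain ⟨g, hg, hc⟩ := BK_step w k N n q (hno k)
    (fun g => (Finset.range (n + 1)).image (fun r => b + k * (2 * g) + r))
    ((Finset.range (n + 1) ×ˢ F ×ˢ F).image (fun p => ((p.2.1 ++ p.2.2).drop p.1).take k))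
    (by
      intro g g' hgg hg' i hi i' hi'
      simp only [Finset.mem_image, Finset.mem_range] at hi hi'
      obtain ⟨t, ht, rfl⟩ := hi
      obtain ⟨t', ht', rfl⟩ := hi'
      have h2 : k * (2 * g + 2) ≤ k * (2 * g') := Nat.mul_le_mul_left k (by omega)
      rw [mul_add] at h2
      omega)
    (by
      intro g hg i hi
      simp only [Finset.mem_image, Finset.mem_range] at hi
      obtain ⟨t, ht, rfl⟩ := hi
      have h2 : k * (2 * g + 2) ≤ k * (2 * q) := Nat.mul_le_mul_left k (by omega)
      rw [mul_add] at h2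
      omega)
    (by
      intro g hg i hi
      simp only [Finset.mem_image, Finset.mem_range] at hi
      obtain ⟨r, hr, rfl⟩ := hi
      refine Finset.mem_image.2 ⟨(r, BKfac w (b + k * (2 * g)) k, BKfac w (b + k * (2 * g + 1)) k),
        ?_, ?_⟩
      · simp only [Finset.mem_product, Finset.mem_range]
        exact ⟨hr, hF _ (by omega), hF _ (by omega)⟩
      · dsimp only
        have e1 : b + k * (2 * g + 1) = b + k * (2 * g) + k := by ring
        have e2 : k + k = r + (k + (k - r)) := by omega
        rw [e1, ← BKfac_add, e2, BKfac_add, BKfac_add]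
        rw [List.drop_left' (BKfac_length _ _ _), List.take_left' (BKfac_length _ _ _)])
    (by
      have h1 : ((Finset.range (n + 1) ×ˢ F ×ˢ F).image
        (fun p => ((p.2.1 ++ p.2.2).drop p.1).take k)).card ≤ (n + 1) * (n * n) := by
        refine Finset.card_image_le.trans ?_
        rw [Finset.card_product, Finset.card_product, Finset.card_range]
        gcongr
      refine lt_of_le_of_lt (Nat.mul_le_mul_left n h1) ?_
      rw [hqdef]; ring_nf; omega)
  obtain ⟨i, hi, i', hi', hne, he⟩ := Finset.exists_ne_map_eq_of_card_lt_of_maps_to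
    (s := (Finset.range (n + 1)).image (fun r => b + k * (2 * g) + r))
    (t := ((Finset.range (n + 1)).image (fun r => b + k * (2 * g) + r)).image
      (fun i => BKfac w i k)) (f := fun i => BKfac w i k) (by
        refine lt_of_le_of_lt hc ?_
        rw [Finset.card_image_of_injective _ (fun a b h => by simpa using h)]
        simp) (fun i hi => Finset.mem_image_of_mem _ hi)
  have main : ∀ r r', r < r' → r' < n + 1 →
      BKfac w (b + k * (2 * g) + r) k = BKfac w (b + k * (2 * g) + r') k →
      ∃ i p, 0 < p ∧ i + (n + 1) * p ≤ N ∧ ∀ j < n * p, w (i + j) = w (i + p + j) := by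
    intro r r' hr hr' he
    have hp : n * (r' - r) ≤ k := by
      have : n * (r' - r) ≤ n * n := Nat.mul_le_mul_left n (by omega)
      nlinarith
    refine ⟨b + k * (2 * g) + r, r' - r, by omega, ?_, ?_⟩
    · have h2 : k * (2 * g + 2) ≤ k * (2 * q) := Nat.mul_le_mul_left k (by omega)
      rw [mul_add] at h2
      rw [add_mul]
      omega
    · intro j hj
      have := BKfac_eq w he j (by omega)
      rw [this]
      congr 1
      omega
  simp only [Finset.mem_image, Finset.mem_range] at hi hi'
  obtain ⟨r, hr, rfl⟩ := hi
  obtain ⟨r', hr', rfl⟩ := hi'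
  rcases lt_trichotomy r r' with hl | hl | hl
  · exact main r r' hl hr' he
  · subst hl; exact absurd rfl hne
  · exact main r' r hl hr he.symm

theorem BK_lt_append {α : Type*} [LinearOrder α] : ∀ (a b s t : List α), a < b →
    a.length = b.length → a ++ s < b ++ t
  | [], [], _, _, h, _ => absurd h (lt_irrefl _)
  | [], _ :: _, _, _, _, h => by simp at h
  | _ :: _, [], _, _, _, h => by simp at h
  | x :: a, y :: b, s, t, h, hl => by
    rw [List.cons_lt_cons_iff] at h
    rw [List.cons_append, List.cons_append, List.cons_lt_cons_iff]
    rcases h with h | ⟨h, h'⟩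
    · exact Or.inl h
    · exact Or.inr ⟨h, BK_lt_append a b s t h' (by simpa using hl)⟩

theorem BK_perm_lt {α : Type*} [LinearOrder α] : ∀ (us us' : List (List α)) (z : List α),
    us.Pairwise (fun u v => ∀ s t, v ++ s < u ++ t) → us'.Perm us → us' ≠ us →
    us'.flatten ++ z < us.flatten ++ z
  | [], us', _, _, hp, hne => absurd hp.eq_nil hne
  | u :: us, [], _, _, hp, _ => by simp at hp
  | u :: us, v :: us', z, hpw, hp, hne => by
    rw [List.pairwise_cons] at hpw
    by_cases h : v = u
    · subst h
      have := BK_perm_lt us us' z hpw.2 (List.perm_cons _ |>.1 hp) (by simpa using hne)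
      simp only [List.flatten_cons, List.append_assoc]
      exact List.append_left_lt this
    · have hv : v ∈ us := by
        have : v ∈ u :: us := hp.subset (by simp)
        simpa [h] using this
      simp only [List.flatten_cons, List.append_assoc]
      exact hpw.1 v hv _ _

theorem BK_period {α : Type*} (w : ℕ → α) (i p : ℕ) : ∀ m,
    (∀ j < m * p, w (i + j) = w (i + p + j)) →
    BKfac w i ((m + 1) * p) = (List.replicate (m + 1) (BKfac w i p)).flatten
  | 0, _ => by simp
  | m + 1, h => by
    have e : (m + 1 + 1) * p = p + (m + 1) * p := by ring
    rw [e, BKfac_add, List.replicate_succ, List.flatten_cons, ← BK_period w i p m, BKfac_congr w h]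
    intro j hj
    exact h j (by rw [add_mul]; omega)

theorem BK_chain {α : Type*} [LinearOrder α] (w : ℕ → α) (k N : ℕ) : ∀ j i, BKPC w k N j i →
    i ≤ N ∧ ∃ (us : List (List α)) (z : List α), us.length = j + 1 ∧
      BKfac w i (N - i) = us.flatten ++ z ∧
      us.Pairwise (fun u v => ∀ s t, v ++ s < u ++ t) ∧
      ∀ v ∈ us, ∃ y t, y ≤ BKfac w i k ∧ y.length = k ∧ v = y ++ t
  | 0, i, h => by
    have h : i + k ≤ N := h
    refine ⟨by omega, [BKfac w i k], BKfac w (i + k) (N - i - k), rfl, ?_, by simp, ?_⟩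
    · simp only [List.flatten_cons, List.flatten_nil, List.append_nil]
      rw [← BKfac_add]
      congr 1
      omega
    · intro v hv
      exact ⟨BKfac w i k, [], le_rfl, BKfac_length _ _ _, by simpa using hv⟩
  | j + 1, i, h => by
    obtain ⟨i', hi, hlt, hc⟩ := h
    obtain ⟨hN, us, z, hl, hf, hp, hm⟩ := BK_chain w k N j i' hc
    have e0 : BKfac w i (i' - i) = BKfac w i k ++ BKfac w (i + k) (i' - i - k) := by
      rw [← BKfac_add]; congr 1; omega
    refine ⟨by omega, BKfac w i (i' - i) :: us, z, by simp [hl], ?_, ?_, ?_⟩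
    · rw [List.flatten_cons, List.append_assoc, ← hf]
      have e : i' = i + (i' - i) := by omega
      conv_rhs => rw [show BKfac w i' (N - i') = BKfac w (i + (i' - i)) (N - i') by rw [← e]]
      rw [← BKfac_add]
      congr 1; omega
    · refine List.pairwise_cons.2 ⟨?_, hp⟩
      intro v hv s t
      obtain ⟨y, t', hy, hyl, rfl⟩ := hm v hv
      rw [e0, List.append_assoc, List.append_assoc]
      exact BK_lt_append _ _ _ _ (lt_of_le_of_lt hy hlt) (by rw [hyl, BKfac_length])
    · intro v hv
      rcases List.mem_cons.1 hv with rfl | hv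
      · exact ⟨_, _, le_rfl, BKfac_length _ _ _, e0⟩
      · obtain ⟨y, t', hy, hyl, rfl⟩ := hm v hv
        exact ⟨y, t', hy.trans hlt.le, hyl, rfl⟩

theorem BK_polar {R : Type*} [Ring R] (d : ℕ) (x : Fin d → R)
    (h : ∀ S : Finset (Fin d), (∑ i ∈ S, x i) ^ d = 0) :
    ∑ r : Fin d → Fin d with Function.Surjective r, (List.ofFn (fun i => x (r i))).prod = 0 := by
  classical
  have h1 : ∀ S : Finset (Fin d), ∑ r : Fin d → Fin d,
      (if Finset.univ.image r ⊆ S then (List.ofFn (fun i => x (r i))).prod else 0) = 0 := by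
    intro S
    have := (MultilinearMap.mkPiAlgebraFin ℤ d R).map_sum_finset (fun _ j => x j) (fun _ => S)
    simp only [MultilinearMap.mkPiAlgebraFin_apply, List.ofFn_const, List.prod_replicate, h S] at this
    rw [← Finset.sum_filter]
    rw [this]
    refine Finset.sum_congr ?_ (fun _ _ => rfl)
    ext r
    simp [Finset.image_subset_iff]
  have h2 : ∑ S : Finset (Fin d), (-1 : ℤ) ^ S.card • ∑ r : Fin d → Fin d,
      (if Finset.univ.image r ⊆ Sᶜ then (List.ofFn (fun i => x (r i))).prod else 0) = 0 := by
    refine Finset.sum_eq_zero (fun S _ => ?_)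
    rw [h1, smul_zero]
  simp only [Finset.smul_sum] at h2
  rw [Finset.sum_comm] at h2
  rw [Finset.sum_filter]
  refine Eq.trans ?_ h2
  refine Finset.sum_congr rfl (fun r _ => ?_)
  have h3 := Finset.sum_powerset_neg_one_pow_card (x := (Finset.univ.image r)ᶜ)
  have h4 : ∑ S : Finset (Fin d), (-1 : ℤ) ^ S.card •
      (if Finset.univ.image r ⊆ Sᶜ then (List.ofFn (fun i => x (r i))).prod else 0) =
      (∑ S ∈ ((Finset.univ.image r)ᶜ).powerset, (-1 : ℤ) ^ S.card) •
        (List.ofFn (fun i => x (r i))).prod := by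
    rw [Finset.sum_smul, ← Finset.sum_filter_add_sum_filter_not Finset.univ
      (fun S : Finset (Fin d) => Finset.univ.image r ⊆ Sᶜ)]
    rw [Finset.sum_eq_zero (s := Finset.univ.filter
      (fun S : Finset (Fin d) => ¬ Finset.univ.image r ⊆ Sᶜ)), add_zero]
    · refine Finset.sum_congr ?_ ?_
      · ext S
        simp only [Finset.mem_filter, Finset.mem_univ, true_and, Finset.mem_powerset]
        exact Finset.subset_compl_comm
      · intro S hS
        rw [if_pos]
        rw [Finset.mem_powerset] at hS
        exact Finset.subset_compl_comm.1 hS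
    · intro S hS
      rw [if_neg (Finset.mem_filter.1 hS).2, smul_zero]
  rw [h4, h3]
  have h5 : (Finset.univ.image r)ᶜ = ∅ ↔ Function.Surjective r := by
    rw [Finset.compl_eq_empty_iff, ← Finset.coe_eq_univ, Finset.coe_image, Finset.coe_univ,
      Set.image_univ, Set.range_eq_univ]
  by_cases hs : Function.Surjective r
  · rw [if_pos hs, if_pos (h5.2 hs), one_smul]
  · rw [if_neg hs, if_neg (fun h => hs (h5.1 h)), zero_smul]

theorem BK_word_mem {α U : Type*} [Ring U] (I : NonUnitalSubring U) (y : α → U)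
    (hy : ∀ c, y c ∈ I) : ∀ L : List α, L ≠ [] → (L.map y).prod ∈ I
  | [], h => absurd rfl h
  | [a], _ => by simpa using hy a
  | a :: b :: L, _ => by
    rw [List.map_cons, List.prod_cons]
    exact I.mul_mem (hy a) (BK_word_mem I y hy (b :: L) (by simp))

theorem BK_words {α U : Type*} [LinearOrder α] [Fintype α] [Ring U] (I : NonUnitalSubring U)
    (y : α → U) (hy : ∀ c, y c ∈ I) (n N s : ℕ) (hn : 0 < n) (hI : ∀ a ∈ I, a ^ (n + 1) = 0)
    (hs : (n + 1) ^ 2 ≤ 3 ^ s) (hcard : 0 < Fintype.card α)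
    (hN : (n + 1) * Fintype.card α * ((3 * (n + 1) ^ 4) ^ s * (2 * (n + 1) ^ 4)) ≤ N) :
    ∀ L : List α, L.length = N → (L.map y).prod = 0 := by
  have hfin : {L : List α | L.length = N}.Finite := List.finite_length_eq α N
  have hwf : {L : List α | L.length = N}.WellFoundedOn (· < ·) := hfin.wellFoundedOn
  intro L hL
  refine hwf.induction (P := fun L => (L.map y).prod = 0) hL ?_
  clear L hL
  intro L hL IH
  have hL : L.length = N := hL
  have : Nonempty α := Fintype.card_pos_iff.1 hcard
  obtain ⟨c⟩ := ‹Nonempty α›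
  let w : ℕ → α := fun j => L.getD j c
  have hw : BKfac w 0 N = L := by
    refine List.ext_getElem (by rw [BKfac_length, hL]) ?_
    intro j h1 h2
    simp [BKfac, w, h2]
  by_cases hno : ∀ k i, ¬ BKPC w k N n i
  · obtain ⟨i, p, hp, hip, hper⟩ := BK_comb w N n s hs hno hN hcard
    have e : N = i + ((n + 1) * p + (N - i - (n + 1) * p)) := by omega
    rw [← hw, e, BKfac_add, BKfac_add, zero_add, BK_period w i p n hper]
    simp only [List.map_append, List.prod_append, List.map_flatten, List.map_replicate]
    rw [List.prod_flatten, List.map_replicate, List.prod_replicate, hI, zero_mul, mul_zero]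
    refine BK_word_mem I y hy _ ?_
    intro h
    have := BKfac_length w i p
    rw [h] at this
    simp at this
    omega
  · push Not at hno
    obtain ⟨k, i, hc⟩ := hno
    have hk : 0 < k := by
      rcases Nat.eq_zero_or_pos k with rfl | h
      · obtain ⟨n, rfl⟩ : ∃ m, n = m + 1 := ⟨n - 1, by omega⟩
        obtain ⟨i', _, hlt, _⟩ := hc
        simp [BKfac] at hlt
      · exact h
    obtain ⟨hi, us, z, hl, hf, hpw, hm⟩ := BK_chain w k N n i hc
    have hdec : L = BKfac w 0 i ++ (us.flatten ++ z) := by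
      rw [← hf, ← hw]
      conv_lhs => rw [show N = i + (N - i) by omega]
      rw [BKfac_add, zero_add]
    obtain ⟨u, rfl⟩ : ∃ u : Fin (n + 1) → List α, us = List.ofFn u := by
      refine ⟨fun j => us[j.1]'(by omega), ?_⟩
      refine List.ext_getElem (by simp [hl]) ?_
      intro j h1 h2
      rw [List.getElem_ofFn]
    have hinj : ∀ a b : Fin (n + 1), a < b → u a ≠ u b := by
      intro a b hab he
      have := List.pairwise_ofFn.1 hpw hab [] []
      rw [he] at this
      exact lt_irrefl _ this
    have hinj' : Function.Injective u := by
      intro a b he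
      rcases lt_trichotomy a b with h | h | h
      · exact absurd he (hinj a b h)
      · exact h
      · exact absurd he.symm (hinj b a h)
    have hpol := BK_polar (n + 1) (fun j => ((u j).map y).prod) (by
      intro S
      refine hI _ (I.sum_mem fun j _ => BK_word_mem I y hy _ ?_)
      obtain ⟨a, t, _, hal, he⟩ := hm (u j) (List.mem_ofFn.2 ⟨j, rfl⟩)
      intro h0
      rw [h0] at he
      have := congrArg List.length he
      simp at this
      omega)
    have hterm : ∀ r : Fin (n + 1) → Fin (n + 1),
        (((BKfac w 0 i ++ ((List.ofFn (fun j => u (r j))).flatten ++ z)).map y).prod) =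
        ((BKfac w 0 i).map y).prod * ((List.ofFn (fun j => ((u (r j)).map y).prod)).prod *
          (z.map y).prod) := by
      intro r
      simp only [List.map_append, List.prod_append, List.map_flatten, List.prod_flatten,
        List.map_ofFn]
      rfl
    have hsum : ∑ r : Fin (n + 1) → Fin (n + 1) with Function.Surjective r,
        (((BKfac w 0 i ++ ((List.ofFn (fun j => u (r j))).flatten ++ z)).map y).prod) = 0 := by
      simp only [hterm]
      rw [← Finset.mul_sum, ← Finset.sum_mul, hpol, zero_mul, mul_zero]
    rw [Finset.sum_eq_single_of_mem id (by simp [Function.surjective_id])] at hsum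
    · rw [hdec]; exact hsum
    · intro r hr hne
      have hr : Function.Surjective r := by simpa using hr
      let σ : Equiv.Perm (Fin (n + 1)) := Equiv.ofBijective r (Finite.surjective_iff_bijective.1 hr)
      have hperm : (List.ofFn (fun j => u (r j))).Perm (List.ofFn u) := Equiv.Perm.ofFn_comp_perm σ u
      refine IH _ ?_ ?_
      · have h1 : (List.ofFn (fun j => u (r j))).flatten.length = (List.ofFn u).flatten.length :=
          hperm.flatten.length_eq
        change List.length _ = N
        rw [← hL, hdec]
        simp only [List.length_append, h1]
      · conv_rhs => rw [hdec]
        refine List.append_left_lt (BK_perm_lt _ _ z hpw hperm ?_)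
        intro he
        apply hne
        funext j
        have := congrFun (List.ofFn_injective he) j
        exact hinj' this

theorem BK_numeric (l d N : ℕ) (hd : 2 ≤ d)
    (hN : (2 : ℝ) ^ (18 : ℕ) * l * ((d : ℝ) ^ 2) ^ (3 * Real.logb 3 ((d : ℝ) ^ 2) + 13) *
      (d : ℝ) ^ 2 ≤ (N : ℝ)) :
    ∃ s, d ^ 2 ≤ 3 ^ s ∧ d * l * ((3 * d ^ 4) ^ s * (2 * d ^ 4)) ≤ N := by
  have hd1 : (2 : ℝ) ≤ d := by exact_mod_cast hd
  set D : ℝ := (d : ℝ) ^ 2 with hD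
  have hD1 : 1 ≤ D := by rw [hD]; nlinarith
  have hD0 : 0 < D := by linarith
  set x := Real.logb 3 D with hx
  have hx0 : 0 ≤ x := Real.logb_nonneg (by norm_num) hD1
  have hxD : (3 : ℝ) ^ x = D := Real.rpow_logb (by norm_num) (by norm_num) hD0
  refine ⟨⌈x⌉₊, ?_, ?_⟩
  · have h1 : D ≤ (3 : ℝ) ^ (⌈x⌉₊ : ℝ) := by
      rw [← hxD]
      exact Real.rpow_le_rpow_of_exponent_le (by norm_num) (Nat.le_ceil x)
    rw [Real.rpow_natCast, hD] at h1
    exact_mod_cast h1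
  · set s := ⌈x⌉₊ with hs
    have hsx : (s : ℝ) ≤ x + 1 := (Nat.ceil_lt_add_one hx0).le
    have h3 : (3 : ℝ) ^ s ≤ 3 * D := by
      rw [← Real.rpow_natCast]
      calc (3 : ℝ) ^ (s : ℝ) ≤ 3 ^ (x + 1) := Real.rpow_le_rpow_of_exponent_le (by norm_num) hsx
        _ = 3 * D := by rw [Real.rpow_add (by norm_num), hxD, Real.rpow_one]; ring
    have h4 : ((d : ℝ) ^ 4) ^ s ≤ D ^ (2 * x + 2) := by
      have : ((d : ℝ) ^ 4) ^ s = D ^ (((2 * s : ℕ)) : ℝ) := by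
        rw [Real.rpow_natCast, hD, ← pow_mul, ← pow_mul]; congr 1; ring
      rw [this]
      refine Real.rpow_le_rpow_of_exponent_le hD1 ?_
      push_cast
      linarith
    have h5 : D ^ (3 * x + 13) = D ^ (2 * x + 2) * D ^ (x + 8) * D ^ 3 := by
      rw [← Real.rpow_natCast, ← Real.rpow_add hD0, ← Real.rpow_add hD0]
      congr 1
      push_cast
      ring
    have h6 : 1 ≤ D ^ (x + 8) := Real.one_le_rpow hD1 (by linarith)
    have h7 : (d : ℝ) ≤ D := by rw [hD]; nlinarith
    have hd4 : (d : ℝ) ^ 4 = D ^ 2 := by rw [hD]; ring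
    have hfin : ((d * l * ((3 * d ^ 4) ^ s * (2 * d ^ 4)) : ℕ) : ℝ) ≤ N := by
      refine le_trans ?_ hN
      push_cast
      rw [mul_pow, h5]
      have hl : (0 : ℝ) ≤ l := by positivity
      have hpos : 0 ≤ D ^ (2 * x + 2) := by positivity
      calc (d : ℝ) * l * (3 ^ s * ((d : ℝ) ^ 4) ^ s * (2 * (d : ℝ) ^ 4))
          ≤ D * l * (3 * D * D ^ (2 * x + 2) * (2 * D ^ 2)) := by
            rw [hd4] at h4 ⊢
            gcongr
        _ = 6 * l * (D ^ (2 * x + 2) * 1 * D ^ 3) * D := by ring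
        _ ≤ 2 ^ 18 * l * (D ^ (2 * x + 2) * D ^ (x + 8) * D ^ 3) * D := by
            gcongr
            norm_num
    exact_mod_cast hfin

theorem BK_foldl {K A : Type*} [Field K] [NonUnitalRing A] [Module K A]
    [IsScalarTower K A A] [SMulCommClass K A A] (L : List A) : ∀ a : A,
    ((L.foldl (· * ·) a : A) : Unitization K A) =
      (a : Unitization K A) * (L.map (fun b : A => (b : Unitization K A))).prod := by
  induction L with
  | nil => intro a; simp
  | cons b L ih =>
    intro a
    rw [List.foldl_cons, ih, List.map_cons, List.prod_cons, Unitization.inr_mul, mul_assoc]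

theorem stmt_11 (K : Type*) [Field K] (A : Type*) [NonUnitalRing A] [Module K A]
    [IsScalarTower K A A] [SMulCommClass K A A] (l d : ℕ) (hl : 0 < l) (hd : 0 < d)
    (g : Fin l → A) (hgen : NonUnitalAlgebra.adjoin K (Set.range g) = ⊤)
    (hnil : ∀ a : A, (List.replicate (d - 1) a).foldl (· * ·) a = 0)
    (N : ℕ)
    (hN : (2 : ℝ) ^ (18 : ℕ) * l * ((d : ℝ) ^ 2) ^ (3 * Real.logb 3 ((d : ℝ) ^ 2) + 13) *
      (d : ℝ) ^ 2 ≤ (N : ℝ)) :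
    ∀ (a : A) (L : List A), L.length + 1 = N → L.foldl (· * ·) a = 0 := by
  rcases Nat.lt_or_ge 1 d with hd2 | hd1
  swap
  · have : d = 1 := by omega
    subst this
    intro a L _
    simpa using hnil (L.foldl (· * ·) a)
  obtain ⟨n, rfl⟩ : ∃ n, d = n + 1 := ⟨d - 1, by omega⟩
  obtain ⟨s, hs, hNs⟩ := BK_numeric l (n + 1) N hd2 hN
  let U := Unitization K A
  let y : Fin l → U := fun c => ((g c : A) : U)
  let I : NonUnitalSubring U := NonUnitalRingHom.range
    ((Unitization.inrNonUnitalAlgHom K A : A →ₙₐ[K] U) : A →ₙ+* U)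
  have hmemI : ∀ x, x ∈ I ↔ ∃ a : A, (a : U) = x := by
    intro x
    exact Iff.rfl
  have hwords : ∀ W : List (Fin l), W.length = N → (W.map y).prod = 0 := by
    refine BK_words I y (fun c => (hmemI _).2 ⟨g c, rfl⟩) n N s (by omega) ?_ hs
      (by simpa using hl) (by simpa using hNs)
    intro x hx
    obtain ⟨a, rfl⟩ := (hmemI x).1 hx
    have h := BK_foldl (K := K) (List.replicate (n + 1 - 1) a) a
    rw [hnil, List.map_replicate, List.prod_replicate, Nat.add_sub_cancel, ← pow_succ'] at h
    rw [← h, Unitization.inr_zero]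
  let S : ℕ → Set U := fun m => {x | ∃ W : List (Fin l), m ≤ W.length ∧ (W.map y).prod = x}
  have hSmul : ∀ m k x z, x ∈ Submodule.span K (S m) → z ∈ Submodule.span K (S k) →
      x * z ∈ Submodule.span K (S (m + k)) := by
    intro m k x z hx hz
    have h1 := Submodule.mul_mem_mul hx hz
    rw [Submodule.span_mul_span] at h1
    refine Submodule.span_mono ?_ h1
    rintro _ ⟨_, ⟨W, hW, rfl⟩, _, ⟨W', hW', rfl⟩, rfl⟩
    exact ⟨W ++ W', by rw [List.length_append]; omega, by simp⟩
  have hSmono : ∀ m k, k ≤ m → Submodule.span K (S m) ≤ Submodule.span K (S k) := by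
    intro m k hk
    refine Submodule.span_mono ?_
    rintro _ ⟨W, hW, rfl⟩
    exact ⟨W, hk.trans hW, rfl⟩
  have hA : ∀ a : A, (a : U) ∈ Submodule.span K (S 1) := by
    intro a
    have ha : a ∈ NonUnitalAlgebra.adjoin K (Set.range g) := by rw [hgen]; trivial
    induction ha using NonUnitalAlgebra.adjoin_induction with
    | mem x hx =>
      obtain ⟨c, rfl⟩ := hx
      exact Submodule.subset_span ⟨[c], by simp, by simp [y]⟩
    | add x z _ _ hx hz => rw [Unitization.inr_add]; exact Submodule.add_mem _ hx hz
    | zero => rw [Unitization.inr_zero]; exact Submodule.zero_mem _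
    | mul x z _ _ hx hz =>
      rw [Unitization.inr_mul]
      exact hSmono _ _ (by omega) (hSmul 1 1 _ _ hx hz)
    | smul r x _ hx => rw [Unitization.inr_smul]; exact Submodule.smul_mem _ _ hx
  have hprod : ∀ L : List A, (L.map (fun b : A => (b : U))).prod ∈ Submodule.span K (S L.length) := by
    intro L
    induction L with
    | nil => exact Submodule.subset_span ⟨[], by simp, by simp⟩
    | cons b L ih =>
      rw [List.map_cons, List.prod_cons, List.length_cons, add_comm]
      exact hSmul _ _ _ _ (hA b) ih
  have hSN : Submodule.span K (S N) = ⊥ := by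
    rw [Submodule.span_eq_bot]
    rintro _ ⟨W, hW, rfl⟩
    rw [← List.take_append_drop N W, List.map_append, List.prod_append, hwords, zero_mul]
    simpa using hW
  intro a L hL
  have h := hSmul _ _ _ _ (hA a) (hprod L)
  rw [← BK_foldl, add_comm, hL, hSN, Submodule.mem_bot] at h
  exact Unitization.inr_injective (R := K) (by rw [h, Unitization.inr_zero])
end

section
/- Let n ≥ 2, l ≥ 1, and consider words over an alphabet of l letters. Every word over this alphabet of length at least Φ(n,l) = 4^{21·log_3 4 + 17} · l · n^{30·log_3 4 + 10 + 12·log_3 n} is either n-divisible, or can be written as a product of at most Φ(n,l) factors, each of which is a power of a word of length less than n. More precisely, the set of non-n-divisible words over the alphabet has height at most Φ(n,l) over the set of words of length less than n: every non-n-divisible word equals u_{1}^{k_1} u_{2}^{k_2} ··· u_{r}^{k_r} with r ≤ Φ(n,l) and each |u_i| < n. -/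
namespace Shir

/-- window of length `t` at position `p` -/
def win {α : Type*} (w : ℕ → α) (p t : ℕ) : List α := (List.range t).map (fun j => w (p + j))

section
variable {α : Type*}

theorem win_length (w : ℕ → α) (p t : ℕ) : (win w p t).length = t := by simp [win]

theorem win_get (w : ℕ → α) (p t j : ℕ) (h : j < (win w p t).length) :
    (win w p t)[j] = w (p + j) := by simp [win]

theorem win_add (w : ℕ → α) (p s t : ℕ) : win w p (s + t) = win w p s ++ win w (p + s) t := by
  simp [win, List.range_add, Function.comp_def, add_assoc]

theorem win_congr (w : ℕ → α) (p q t : ℕ) (h : ∀ j < t, w (p + j) = w (q + j)) :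
    win w p t = win w q t := by
  simp only [win]
  apply List.map_congr_left
  intro j hj
  exact h j (List.mem_range.1 hj)

theorem win_inj (w : ℕ → α) (p q t : ℕ) (h : win w p t = win w q t) :
    ∀ j < t, w (p + j) = w (q + j) := by
  intro j hj
  have := win_get w p t j (by rw [win_length]; exact hj)
  rw [← this, ← win_get w q t j (by rw [win_length]; exact hj)]
  simp only [h]

theorem flatten_win (w : ℕ → α) (q : ℕ → ℕ) (n : ℕ) (hq : ∀ k < n, q k ≤ q (k + 1)) :
    q 0 ≤ q n ∧ ((List.range n).map (fun k => win w (q k) (q (k + 1) - q k))).flatten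
      = win w (q 0) (q n - q 0) := by
  induction n with
  | zero => simp [win]
  | succ n ih =>
    obtain ⟨h1, h2⟩ := ih (fun k hk => hq k (by omega))
    have h3 := hq n (by omega)
    refine ⟨by omega, ?_⟩
    rw [List.range_succ, List.map_append, List.flatten_append, h2]
    have e : q (n + 1) - q 0 = (q n - q 0) + (q (n + 1) - q n) := by omega
    rw [e, win_add]
    have e2 : q 0 + (q n - q 0) = q n := by omega
    rw [e2]
    simp

theorem win_getD (W : List α) (d : α) : win (fun i => W.getD i d) 0 W.length = W := by
  apply List.ext_getElem
  · rw [win_length]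
  · intro i h1 h2
    rw [win_get]
    simp [h2]

variable [LinearOrder α]

theorem div_lemma (w : ℕ → α) (L n : ℕ) (q : ℕ → ℕ) (hq : ∀ k < n, q k < q (k + 1))
    (hL : q n = L)
    (hs : ∀ k, k + 1 < n → ∃ s, q k + s < q (k + 1) ∧ q (k + 1) + s < q (k + 2) ∧
      (∀ j < s, w (q k + j) = w (q (k + 1) + j)) ∧ w (q (k + 1) + s) < w (q k + s)) :
    IsNDivisible n (win w 0 L) := by
  obtain ⟨h1, h2⟩ := flatten_win w q n (fun k hk => (hq k hk).le)
  refine ⟨win w 0 (q 0), (List.range n).map (fun k => win w (q k) (q (k + 1) - q k)),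
    by simp, ?_, ?_, ?_⟩
  · intro u hu
    obtain ⟨k, hk, rfl⟩ := List.mem_map.1 hu
    have := hq k (List.mem_range.1 hk)
    intro h
    have h' := congrArg List.length h
    rw [win_length] at h'
    simp at h'
    omega
  · rw [h2]
    have e : L = q 0 + (q n - q 0) := by omega
    conv_lhs => rw [e, win_add]
    simp
  · show List.IsChain _ _
    rw [List.isChain_iff_getElem]
    intro k hk
    simp only [List.length_map, List.length_range] at hk
    obtain ⟨s, a, b, c, d⟩ := hs k hk
    simp only [List.getElem_map, List.getElem_range]
    rw [List.lt_iff_exists]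
    right
    refine ⟨s, by rw [win_length]; show s < q (k + 2) - q (k + 1); omega,
      by rw [win_length]; omega, ?_, ?_⟩
    · intro j hj
      rw [win_get, win_get, c j hj]
    · rw [win_get, win_get]; exact d

theorem div_lemma2 (w : ℕ → α) (L n M : ℕ) (p o : ℕ → ℕ)
    (hp : ∀ k, k + 1 < n → p k + M ≤ p (k + 1)) (hL : p (n - 1) + M ≤ L)
    (ho : ∀ k < n, o k < M)
    (hs : ∀ k, k + 1 < n → ∃ s, o k + s < M ∧ o (k + 1) + s < M ∧
      (∀ j < s, w (p k + o k + j) = w (p (k + 1) + o (k + 1) + j)) ∧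
      w (p (k + 1) + o (k + 1) + s) < w (p k + o k + s)) :
    IsNDivisible n (win w 0 L) := by
  have key : ∀ k < n, p k + M ≤ (if k + 1 < n then p (k + 1) + o (k + 1) else L) := by
    intro k hk
    split_ifs with h
    · have := hp k h; omega
    · have : k = n - 1 := by omega
      subst this; exact hL
  apply div_lemma w L n (fun k => if k < n then p k + o k else L)
  · intro k hk
    have h1 := key k hk
    have h2 := ho k hk
    simp only [hk, if_true]
    omega
  · simp
  · intro k hk
    obtain ⟨s, a, b, c, d⟩ := hs k hk
    have h1 := key k (by omega)
    have h2 := key (k + 1) hk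
    have hk' : k < n := by omega
    simp only [hk, hk', if_true] at h1 ⊢
    refine ⟨s, by omega, ?_, c, d⟩
    have : p (k + 1) + M ≤ (if k + 2 < n then p (k + 2) + o (k + 2) else L) := h2
    omega

/-- end of a decreasing chain -/
def Dec (S : Finset ℕ) (f : ℕ → List α) : ℕ → ℕ → Prop
  | 0, i => i ∈ S
  | m + 1, i => i ∈ S ∧ ∃ j, j < i ∧ f i < f j ∧ Dec S f m j

theorem Dec.mem {S : Finset ℕ} {f : ℕ → List α} {m i : ℕ} (h : Dec S f m i) : i ∈ S := by
  cases m with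
  | zero => exact h
  | succ m => exact h.1

theorem Dec.seq {S : Finset ℕ} {f : ℕ → List α} (m : ℕ) : ∀ {i : ℕ}, Dec S f m i →
    ∃ p : ℕ → ℕ, p m = i ∧ (∀ k ≤ m, p k ∈ S) ∧
      ∀ k < m, p k < p (k + 1) ∧ f (p (k + 1)) < f (p k) := by
  induction m with
  | zero => intro i h; exact ⟨fun _ => i, rfl, fun _ _ => h, fun k hk => by omega⟩
  | succ m ih =>
    rintro i ⟨hi, j, hji, hf, hd⟩
    obtain ⟨p, rfl, h2, h3⟩ := ih hd
    refine ⟨fun k => if k ≤ m then p k else i, by simp, ?_, ?_⟩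
    · intro k hk
      by_cases h : k ≤ m
      · simp only [h, if_true]; exact h2 k h
      · simp only [h, if_false]; exact hi
    · intro k hk
      by_cases h : k + 1 ≤ m
      · have h' : k ≤ m := by omega
        simp only [h, h', if_true]; exact h3 k h
      · have h' : k = m := by omega
        subst h'
        simp only [h, le_refl, if_true, if_false]
        exact ⟨hji, hf⟩

open Classical in
theorem coloring (S : Finset ℕ) (f : ℕ → List α) (n : ℕ) (hn : 1 ≤ n)
    (h : ∀ i, ¬ Dec S f (n - 1) i) :
    ∃ c : ℕ → ℕ, (∀ i, c i < n) ∧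
      ∀ i ∈ S, ∀ j ∈ S, i < j → c i = c j → f i ≤ f j := by
  refine ⟨fun i => Nat.findGreatest (fun m => Dec S f m i) (n - 1), ?_, ?_⟩
  · intro i
    have := Nat.findGreatest_le (P := fun m => Dec S f m i) (n - 1)
    show Nat.findGreatest (fun m => Dec S f m i) (n - 1) < n
    omega
  · intro i hi j hj hij hc
    by_contra hlt
    rw [not_le] at hlt
    dsimp only at hc
    have h1 : Dec S f (Nat.findGreatest (fun m => Dec S f m i) (n - 1)) i :=
      Nat.findGreatest_spec (P := fun m => Dec S f m i) (m := 0) (Nat.zero_le _) hi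
    have hle := Nat.findGreatest_le (P := fun m => Dec S f m i) (n - 1)
    have hne : Nat.findGreatest (fun m => Dec S f m i) (n - 1) ≠ n - 1 := by
      intro he
      rw [he] at h1
      exact h i h1
    have h2 : Dec S f (Nat.findGreatest (fun m => Dec S f m i) (n - 1) + 1) j :=
      ⟨hj, i, hij, hlt, h1⟩
    have := Nat.le_findGreatest (P := fun m => Dec S f m j) (n := n - 1) (by omega) h2
    omega

/-- pieces: monotone `g` with at most `n * D` steps, fibers have `≤ n` values -/
theorem pieces (S : Finset ℕ) (f : ℕ → List α) (n D : ℕ) (hn : 1 ≤ n)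
    (h : ∀ i, ¬ Dec S f (n - 1) i) (hD : (S.image f).card ≤ D) :
    ∃ g : ℕ → ℕ, Monotone g ∧ (∀ i, g i ≤ n * D) ∧
      ∀ v, ((S.filter (fun i => g i = v)).image f).card ≤ n := by
  obtain ⟨c, hc, hm⟩ := coloring S f n hn h
  have mono : ∀ i j, i ≤ j → (S.filter (· ≤ i)).image (fun j => (c j, f j)) ⊆
      (S.filter (· ≤ j)).image (fun j => (c j, f j)) := by
    intro i j hij
    apply Finset.image_subset_image
    intro x hx
    rw [Finset.mem_filter] at hx ⊢
    exact ⟨hx.1, hx.2.trans hij⟩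
  refine ⟨fun i => ((S.filter (· ≤ i)).image (fun j => (c j, f j))).card, ?_, ?_, ?_⟩
  · intro i j hij
    exact Finset.card_le_card (mono i j hij)
  · intro i
    calc _ ≤ ((Finset.range n) ×ˢ (S.image f)).card := by
          apply Finset.card_le_card
          intro x hx
          obtain ⟨j, hj, rfl⟩ := Finset.mem_image.1 hx
          rw [Finset.mem_product]
          exact ⟨Finset.mem_range.2 (hc j),
            Finset.mem_image_of_mem _ (Finset.mem_filter.1 hj).1⟩
      _ ≤ n * D := by
          rw [Finset.card_product, Finset.card_range]
          exact Nat.mul_le_mul_left _ hD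
  · intro v
    dsimp only
    set T := S.filter (fun i => ((S.filter (· ≤ i)).image (fun j => (c j, f j))).card = v) with hT
    have key : ∀ i ∈ T, ∀ j ∈ T, i < j → c i = c j → f i = f j := by
      intro i hi j hj hij hcc
      rw [hT, Finset.mem_filter] at hi hj
      have heq := Finset.eq_of_subset_of_card_le (mono i j hij.le) (by rw [hi.2, hj.2])
      have hjm : (c j, f j) ∈ (S.filter (· ≤ i)).image (fun j => (c j, f j)) := by
        rw [heq]
        exact Finset.mem_image_of_mem (fun j => (c j, f j))
          (Finset.mem_filter.2 ⟨hj.1, le_rfl⟩)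
      obtain ⟨j', hj', he⟩ := Finset.mem_image.1 hjm
      rw [Finset.mem_filter] at hj'
      have e1 : c j' = c j := (Prod.ext_iff.1 he).1
      have e2 : f j' = f j := (Prod.ext_iff.1 he).2
      apply le_antisymm (hm i hi.1 j hj.1 hij hcc)
      rcases hj'.2.lt_or_eq with hlt | heq'
      · rw [← e2]; exact hm j' hj'.1 i hi.1 hlt (by rw [e1, hcc])
      · rw [← e2, heq']
    have key2 : ∀ i ∈ T, ∀ j ∈ T, c i = c j → f i = f j := by
      intro i hi j hj hcc
      rcases lt_trichotomy i j with h | h | h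
      · exact key i hi j hj h hcc
      · rw [h]
      · exact (key j hj i hi h hcc.symm).symm
    calc (T.image f).card ≤ (T.image c).card := by
          classical
          choose! r hr1 hr2 using fun (y : List α) (hy : y ∈ T.image f) => Finset.mem_image.1 hy
          apply Finset.card_le_card_of_injOn (fun y => c (r y))
          · intro y hy
            exact Finset.mem_coe.2 (Finset.mem_image_of_mem _ (hr1 y hy))
          · intro y hy z hz hyz
            rw [← hr2 y hy, ← hr2 z hz]
            exact key2 _ (hr1 y hy) _ (hr1 z hz) hyz
      _ ≤ (Finset.range n).card := by
          apply Finset.card_le_card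
          intro x hx
          obtain ⟨j, hj, rfl⟩ := Finset.mem_image.1 hx
          exact Finset.mem_range.2 (hc j)
      _ = n := Finset.card_range n

theorem card_fib {ι : Type*} [DecidableEq ι] (S : Finset ℕ) (f : ℕ → ι) (g : ℕ → ℕ) (K m : ℕ)
    (hg : ∀ i, g i ≤ K)
    (h : ∀ v, ((S.filter (fun i => g i = v)).image f).card ≤ m) :
    (S.image f).card ≤ (K + 1) * m := by
  have : S.image f ⊆ (Finset.range (K + 1)).biUnion
      (fun v => (S.filter (fun i => g i = v)).image f) := by
    intro x hx
    obtain ⟨j, hj, rfl⟩ := Finset.mem_image.1 hx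
    rw [Finset.mem_biUnion]
    exact ⟨g j, Finset.mem_range.2 (by have := hg j; omega),
      Finset.mem_image_of_mem _ (Finset.mem_filter.2 ⟨hj, rfl⟩)⟩
  calc _ ≤ _ := Finset.card_le_card this
    _ ≤ (Finset.range (K + 1)).card * m := Finset.card_biUnion_le_card_mul _ _ _ (fun v _ => h v)
    _ = _ := by rw [Finset.card_range]

theorem no_dec (w : ℕ → α) (L n M : ℕ) (hn : 2 ≤ n) (hW : ¬ IsNDivisible n (win w 0 L))
    (S : Finset ℕ) (hS : ∀ i ∈ S, ∀ j ∈ S, i < j → i + M ≤ j) (hSL : ∀ i ∈ S, i + M ≤ L)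
    (o t : ℕ) (hot : o + t ≤ M) (i : ℕ) : ¬ Dec S (fun i => win w (i + o) t) (n - 1) i := by
  intro h
  obtain ⟨p, hp, hpS, hpd⟩ := Dec.seq _ h
  have hlt : ∀ k, k + 1 < n → ∃ s, s < t ∧ 
      (∀ j < s, w (p k + o + j) = w (p (k + 1) + o + j)) ∧
      w (p (k + 1) + o + s) < w (p k + o + s) := by
    intro k hk
    have := (hpd k (by omega)).2
    rw [List.lt_iff_exists] at this
    rcases this with ⟨_, h⟩ | ⟨s, h1, h2, h3, h4⟩
    · rw [win_length, win_length] at h; omega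
    · rw [win_get, win_get] at h4
      refine ⟨s, by rwa [win_length] at h1, ?_, h4⟩
      intro j hj
      have := h3 j hj
      rw [win_get, win_get] at this
      exact this.symm
  have ht : 0 < t := by
    obtain ⟨s, hs, _⟩ := hlt 0 (by omega); omega
  apply hW
  apply div_lemma2 w L n M p (fun _ => o)
  · intro k hk
    exact hS _ (hpS _ (by omega)) _ (hpS _ (by omega)) (hpd k (by omega)).1
  · exact hSL _ (hpS _ (by omega))
  · intro k hk; omega
  · intro k hk
    obtain ⟨s, a, b, c⟩ := hlt k hk
    exact ⟨s, by omega, by omega, b, c⟩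

theorem distinct [Fintype α] (w : ℕ → α) (L n M : ℕ) (hn : 2 ≤ n)
    (hW : ¬ IsNDivisible n (win w 0 L))
    (S : Finset ℕ) (hS : ∀ i ∈ S, ∀ j ∈ S, i < j → i + M ≤ j) (hSL : ∀ i ∈ S, i + M ≤ L)
    (hα : 1 ≤ Fintype.card α)
    (k : ℕ) : ∀ o, o + 2 ^ k ≤ M →
    (S.image (fun i => win w (i + o) (2 ^ k))).card ≤ Fintype.card α * (3 * n ^ 3) ^ k := by
  induction k with
  | zero =>
    intro o ho
    calc _ ≤ ((Finset.univ : Finset α).image (fun a => [a])).card := by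
          apply Finset.card_le_card
          intro x hx
          obtain ⟨j, hj, rfl⟩ := Finset.mem_image.1 hx
          simp [win]
      _ ≤ _ := by
          refine Finset.card_image_le.trans ?_
          simp
  | succ k ih =>
    intro o ho
    have e : 2 ^ (k + 1) = 2 ^ k + 2 ^ k := by ring
    rw [e] at ho ⊢
    have h2k := Nat.two_pow_pos k
    set D := Fintype.card α * (3 * n ^ 3) ^ k with hDdef
    have hD : 1 ≤ D := Nat.mul_pos hα (by positivity)
    obtain ⟨g1, m1, b1, c1⟩ := pieces S _ n D (by omega)
      (no_dec w L n M hn hW S hS hSL o (2 ^ k) (by omega)) (ih o (by omega))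
    obtain ⟨g2, m2, b2, c2⟩ := pieces S _ n D (by omega)
      (no_dec w L n M hn hW S hS hSL (o + 2 ^ k) (2 ^ k) (by omega))
      (ih (o + 2 ^ k) (by omega))
    have := card_fib S (fun i => win w (i + o) (2 ^ k + 2 ^ k)) (fun i => g1 i + g2 i)
      (2 * (n * D)) (n * n) (fun i => by have := b1 i; have := b2 i; omega) ?_
    · refine this.trans ?_
      have e3 : Fintype.card α * (3 * n ^ 3) ^ (k + 1) = D * (3 * n ^ 3) := by
        rw [hDdef]; ring
      rw [e3]
      nlinarith [Nat.mul_pos (show 0 < n by omega) hD, Nat.mul_pos (show 0 < n by omega) (show 0 < n by omega)]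
    · intro v
      rcases (S.filter (fun i => g1 i + g2 i = v)).eq_empty_or_nonempty with h0 | ⟨i0, hi0⟩
      · simp [h0]
      rw [Finset.mem_filter] at hi0
      have hsub : ∀ i ∈ S.filter (fun i => g1 i + g2 i = v), g1 i = g1 i0 ∧ g2 i = g2 i0 := by
        intro i hi
        rw [Finset.mem_filter] at hi
        rcases le_total i i0 with h | h
        · have := m1 h; have := m2 h; omega
        · have := m1 h; have := m2 h; omega
      calc _ ≤ ((((S.filter (fun i => g1 i = g1 i0)).image (fun i => win w (i + o) (2 ^ k))) ×ˢ
            ((S.filter (fun i => g2 i = g2 i0)).image (fun i => win w (i + (o + 2 ^ k)) (2 ^ k)))).image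
              (fun x => x.1 ++ x.2)).card := by
            apply Finset.card_le_card
            intro x hx
            obtain ⟨j, hj, rfl⟩ := Finset.mem_image.1 hx
            obtain ⟨q1, q2⟩ := hsub j hj
            have hjS := (Finset.mem_filter.1 hj).1
            rw [Finset.mem_image]
            refine ⟨(win w (j + o) (2 ^ k), win w (j + (o + 2 ^ k)) (2 ^ k)), ?_, ?_⟩
            · rw [Finset.mem_product]
              exact ⟨Finset.mem_image_of_mem (fun i => win w (i + o) (2 ^ k))
                  (Finset.mem_filter.2 ⟨hjS, q1⟩),
                Finset.mem_image_of_mem (fun i => win w (i + (o + 2 ^ k)) (2 ^ k))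
                  (Finset.mem_filter.2 ⟨hjS, q2⟩)⟩
            · dsimp only
              rw [win_add, add_assoc]
        _ ≤ n * n := by
            refine Finset.card_image_le.trans ?_
            rw [Finset.card_product]
            exact Nat.mul_le_mul (c1 _) (c2 _)

/-- rich position -/
def Rich (w : ℕ → α) (L n M i : ℕ) : Prop :=
  i + M ≤ L ∧ ∀ a p, 1 ≤ p → a + p < n → ∃ j, a + p + j < M ∧ w (i + a + j) ≠ w (i + a + p + j)

theorem rich_fiber (w : ℕ → α) (L n M : ℕ) (hn : 2 ≤ n) (hM : n ≤ M)
    (hW : ¬ IsNDivisible n (win w 0 L))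
    (S : Finset ℕ) (hS : ∀ i ∈ S, ∀ j ∈ S, i < j → i + M ≤ j) (hR : ∀ i ∈ S, Rich w L n M i)
    (y : List α) : (S.filter (fun i => win w i M = y)).card ≤ n := by
  by_contra hc
  rw [not_le] at hc
  obtain ⟨T, hTs, hT⟩ := Finset.exists_subset_card_eq hc.le
  have hTS : ∀ i ∈ T, i ∈ S ∧ win w i M = y := fun i hi => Finset.mem_filter.1 (hTs hi)
  apply hW
  have hn0 : 0 < n := by omega
  set e := T.orderEmbOfFin hT with he
  have heT : ∀ k, e k ∈ T := fun k => Finset.orderEmbOfFin_mem T hT k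
  set p0 := e ⟨0, hn0⟩ with hp0
  set F : Fin n → List α := fun a => win w (p0 + a) (M - a) with hF
  set σ := Tuple.sort F with hσ
  have hmono : Monotone (F ∘ σ) := Tuple.monotone_sort F
  have hw : ∀ k, ∀ j < M, w (e k + j) = w (p0 + j) := by
    intro k
    apply win_inj
    rw [(hTS _ (heT k)).2, (hTS _ (heT ⟨0, hn0⟩)).2]
  apply div_lemma2 w L n M (fun k => if h : k < n then e ⟨k, h⟩ else 0)
    (fun k => if h : k < n then (σ (Fin.rev ⟨k, h⟩) : ℕ) else 0)
  · intro k hk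
    have hk' : k < n := by omega
    simp only [hk, hk', dif_pos]
    apply hS _ (hTS _ (heT _)).1 _ (hTS _ (heT _)).1
    apply e.strictMono
    simp
  · have : n - 1 < n := by omega
    simp only [this, dif_pos]
    exact (hR _ (hTS _ (heT _)).1).1
  · intro k hk
    simp only [hk, dif_pos]
    have := (σ (Fin.rev ⟨k, hk⟩)).2
    omega
  · intro k hk
    have hk' : k < n := by omega
    simp only [hk, hk', dif_pos]
    set a := σ (Fin.rev ⟨k, hk'⟩) with ha
    set b := σ (Fin.rev ⟨k + 1, hk⟩) with hb
    have hle : F b ≤ F a := by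
      apply hmono
      rw [Fin.rev_le_rev]
      simp
    have hab : a ≠ b := by
      intro h
      have := Fin.rev_injective (σ.injective h)
      simp at this
    have han := a.2
    have hbn := b.2
    have hne : F b ≠ F a := by
      intro h
      have := congrArg List.length h
      simp only [hF, win_length] at this
      apply hab
      apply Fin.ext
      omega
    have hlt := lt_of_le_of_ne hle hne
    rw [List.lt_iff_exists] at hlt
    rcases hlt with ⟨h1, h2⟩ | ⟨s, h1, h2, h3, h4⟩
    · exfalso
      simp only [hF, win_length] at h1 h2
      obtain ⟨j, hj, hj'⟩ := (hR p0 (hTS _ (heT _)).1).2 a (b - a) (by omega) (by omega)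
      apply hj'
      have e1 : M - (a : ℕ) = (M - b) + (b - a) := by omega
      rw [e1, win_add, List.take_left' (win_length _ _ _)] at h1
      have := win_inj w _ _ _ h1 j (by omega)
      rw [← this]
      congr 1
      omega
    · rw [win_get, win_get] at h4
      simp only [hF, win_length] at h1 h2
      refine ⟨s, by omega, by omega, ?_, ?_⟩
      · intro j hj
        have := h3 j hj
        rw [win_get, win_get] at this
        rw [add_assoc, add_assoc, hw ⟨k, hk'⟩ _ (by omega), hw ⟨k + 1, hk⟩ _ (by omega),
          ← add_assoc, ← add_assoc]
        exact this.symm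
      · rw [add_assoc, add_assoc, hw ⟨k, hk'⟩ _ (by omega), hw ⟨k + 1, hk⟩ _ (by omega),
          ← add_assoc, ← add_assoc]
        exact h4

theorem rich_spaced [Fintype α] (w : ℕ → α) (L n k : ℕ) (hn : 2 ≤ n) (hM : n ≤ 2 ^ k)
    (hW : ¬ IsNDivisible n (win w 0 L)) (hα : 1 ≤ Fintype.card α)
    (S : Finset ℕ) (hS : ∀ i ∈ S, ∀ j ∈ S, i < j → i + 2 ^ k ≤ j)
    (hR : ∀ i ∈ S, Rich w L n (2 ^ k) i) :
    S.card ≤ n * (Fintype.card α * (3 * n ^ 3) ^ k) := by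
  have h1 := distinct w L n (2 ^ k) hn hW S hS (fun i hi => (hR i hi).1) hα k 0 (by omega)
  calc S.card ≤ n * (S.image (fun i => win w i (2 ^ k))).card :=
        Finset.card_le_mul_card_image S n
          (fun y _ => rich_fiber w L n (2 ^ k) hn hM hW S hS hR y)
    _ ≤ _ := Nat.mul_le_mul_left _ h1

theorem rich_card [Fintype α] (w : ℕ → α) (L n k : ℕ) (hn : 2 ≤ n) (hM : n ≤ 2 ^ k)
    (hW : ¬ IsNDivisible n (win w 0 L)) (hα : 1 ≤ Fintype.card α)
    (S : Finset ℕ) (hR : ∀ i ∈ S, Rich w L n (2 ^ k) i) :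
    S.card ≤ 2 ^ k * (n * (Fintype.card α * (3 * n ^ 3) ^ k)) := by
  have hpos := Nat.two_pow_pos k
  have : (S.image (fun i => i % 2 ^ k)).card ≤ 2 ^ k := by
    calc _ ≤ (Finset.range (2 ^ k)).card := by
          apply Finset.card_le_card
          intro x hx
          obtain ⟨j, hj, rfl⟩ := Finset.mem_image.1 hx
          exact Finset.mem_range.2 (Nat.mod_lt _ hpos)
      _ = _ := Finset.card_range _
  calc S.card ≤ (n * (Fintype.card α * (3 * n ^ 3) ^ k)) * (S.image (fun i => i % 2 ^ k)).card := by
        apply Finset.card_le_mul_card_image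
        intro y _
        apply rich_spaced w L n k hn hM hW hα
        · intro i hi j hj hij
          have hi' := (Finset.mem_filter.1 hi).2
          have hj' := (Finset.mem_filter.1 hj).2
          have hd : 2 ^ k ∣ j - i := (Nat.modEq_iff_dvd' hij.le).1 (hi'.trans hj'.symm)
          have := Nat.le_of_dvd (by omega) hd
          omega
        · intro i hi
          exact hR i (Finset.mem_filter.1 hi).1
    _ ≤ _ := by rw [mul_comm]; exact Nat.mul_le_mul_right _ this

/-- product of at most `r` powers -/
def Ht (n r : ℕ) (X : List α) : Prop :=
  ∃ ps : List (List α × ℕ), ps.length ≤ r ∧ (∀ x ∈ ps, x.1.length < n) ∧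
    X = (ps.map (fun x => (List.replicate x.2 x.1).flatten)).flatten

omit [LinearOrder α] in
theorem Ht.app {n r s : ℕ} {X Y : List α} (hX : Ht n r X) (hY : Ht n s Y) :
    Ht n (r + s) (X ++ Y) := by
  obtain ⟨p, h1, h2, rfl⟩ := hX
  obtain ⟨q, h3, h4, rfl⟩ := hY
  refine ⟨p ++ q, by simp; omega, ?_, by simp⟩
  intro x hx
  rcases List.mem_append.1 hx with h | h
  · exact h2 x h
  · exact h4 x h

omit [LinearOrder α] in
theorem Ht.mono {n r s : ℕ} {X : List α} (hX : Ht n r X) (h : r ≤ s) : Ht n s X := by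
  obtain ⟨p, h1, h2, h3⟩ := hX
  exact ⟨p, h1.trans h, h2, h3⟩

omit [LinearOrder α] in
theorem Ht.letters (w : ℕ → α) (n p t : ℕ) (hn : 2 ≤ n) : Ht n t (win w p t) := by
  refine ⟨(win w p t).map (fun a => ([a], 1)), by simp [win_length], ?_, ?_⟩
  · intro x hx
    obtain ⟨a, _, rfl⟩ := List.mem_map.1 hx
    simp; omega
  · rw [List.map_map]
    generalize win w p t = X
    induction X with
    | nil => rfl
    | cons a X ih => simp [Function.comp_def] at ih ⊢; exact ih

omit [LinearOrder α] in
theorem win_periodic (w : ℕ → α) (per : ℕ) (m : ℕ) : ∀ p,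
    (∀ j, j + per < per * m → w (p + j) = w (p + per + j)) →
    win w p (per * m) = (List.replicate m (win w p per)).flatten := by
  induction m with
  | zero => intro p _; simp [win]
  | succ m ih =>
    intro p h
    rw [Nat.mul_succ, add_comm, win_add, List.replicate_succ, List.flatten_cons]
    congr 1
    rw [ih (p + per)]
    · rcases Nat.eq_zero_or_pos m with h0 | h0
      · subst h0; simp
      · congr 2
        apply win_congr
        intro j hj
        refine (h j ?_).symm
        rw [Nat.mul_succ]
        have := Nat.mul_le_mul_left per h0
        omega
    · intro j hj
      have := h (per + j) (by rw [Nat.mul_succ]; omega)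
      rw [← add_assoc] at this
      rw [this]
      congr 1
      omega

omit [LinearOrder α] in
theorem Ht.periodic (w : ℕ → α) (n per p t : ℕ) (h1 : 1 ≤ per) (h2 : per < n)
    (h : ∀ j, j + per < t → w (p + j) = w (p + per + j)) : Ht n 2 (win w p t) := by
  have e : t = per * (t / per) + t % per := (Nat.div_add_mod t per).symm
  have hlt := Nat.mod_lt t h1
  refine ⟨[(win w p per, t / per), (win w (p + per * (t / per)) (t % per), 1)], by simp, ?_, ?_⟩
  · intro x hx
    simp at hx
    rcases hx with rfl | rfl
    · simp [win_length, h2]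
    · simp [win_length]; omega
  · conv_lhs => rw [e, win_add]
    rw [win_periodic w per]
    · simp
    · intro j hj
      exact h j (by omega)

open Classical in
theorem decomp (w : ℕ → α) (L n M : ℕ) (hn : 2 ≤ n) (hM : 4 * n < M) (d : ℕ) :
    ∀ i, i + d = L →
    Ht n ((n + 3) * ((Finset.Ico i L).filter (Rich w L n M)).card + (M + n + 2)) (win w i d) := by
  induction d using Nat.strong_induction_on with
  | _ d ih =>
    intro i hi
    by_cases hfin : L < i + M
    · exact (Ht.letters w n i d hn).mono (by omega)
    rw [not_lt] at hfin
    -- consuming a rich position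
    have consume : ∀ i', i ≤ i' → i' < L → Rich w L n M i' →
        (∀ d' < d, ∀ i, i + d' = L → Ht n ((n + 3) *
          ((Finset.Ico i L).filter (Rich w L n M)).card + (M + n + 2)) (win w i d')) →
        Ht n (1 + (n + 3) * (((Finset.Ico i L).filter (Rich w L n M)).card - 1) + (M + n + 2))
          (win w i' (L - i')) ∧ 1 ≤ ((Finset.Ico i L).filter (Rich w L n M)).card := by
      intro i' h1 h2 hr IH
      have e : L - i' = 1 + (L - (i' + 1)) := by omega
      have hcard : ((Finset.Ico (i' + 1) L).filter (Rich w L n M)).card + 1 ≤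
          ((Finset.Ico i L).filter (Rich w L n M)).card := by
        rw [← Finset.card_insert_of_notMem (a := i')]
        · apply Finset.card_le_card
          intro x hx
          rcases Finset.mem_insert.1 hx with rfl | hx
          · exact Finset.mem_filter.2 ⟨Finset.mem_Ico.2 ⟨h1, h2⟩, hr⟩
          · rw [Finset.mem_filter, Finset.mem_Ico] at hx ⊢
            exact ⟨⟨by omega, hx.1.2⟩, hx.2⟩
        · simp
      refine ⟨?_, by omega⟩
      rw [e, win_add, add_assoc 1]
      refine (Ht.letters w n i' 1 hn).app ((IH (L - (i' + 1)) (by omega) (i' + 1) (by omega)).mono ?_)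
      gcongr
      omega
    by_cases hr : Rich w L n M i
    · obtain ⟨c1, c2⟩ := consume i le_rfl (by omega) hr ih
      have e : L - i = d := by omega
      rw [e] at c1
      refine c1.mono ?_
      obtain ⟨R, hR⟩ := Nat.exists_eq_add_of_le c2
      rw [hR, Nat.add_sub_cancel_left, mul_add]
      omega
    · have : ∃ a p, 1 ≤ p ∧ a + p < n ∧ ∀ j, a + p + j < M → w (i + a + j) = w (i + a + p + j) := by
        by_contra hcon
        apply hr
        refine ⟨hfin, fun a p h1 h2 => ?_⟩
        by_contra h3
        apply hcon
        refine ⟨a, p, h1, h2, fun j hj => ?_⟩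
        by_contra h4
        exact h3 ⟨j, hj, h4⟩
      obtain ⟨a, p, hp1, hap, hper⟩ := this
      -- first break
      have hex : ∃ e, i + M ≤ e ∧ (e = L ∨ w (e - p) ≠ w e) := ⟨L, hfin, Or.inl rfl⟩
      obtain ⟨e, ⟨he1, he2⟩, hmin⟩ : ∃ e, (i + M ≤ e ∧ (e = L ∨ w (e - p) ≠ w e)) ∧
          ∀ m < e, ¬ (i + M ≤ m ∧ (m = L ∨ w (m - p) ≠ w m)) :=
        ⟨Nat.find hex, Nat.find_spec hex, fun m hm => Nat.find_min hex hm⟩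
      have heL : e ≤ L := by
        by_contra h
        exact hmin L (by omega) ⟨hfin, Or.inl rfl⟩
      have hper2 : ∀ m, i + a + p ≤ m → m < e → w (m - p) = w m := by
        intro m hm1 hm2
        by_cases h : m < i + M
        · have := hper (m - (i + a + p)) (by omega)
          have e1 : i + a + (m - (i + a + p)) = m - p := by omega
          have e2 : i + a + p + (m - (i + a + p)) = m := by omega
          rwa [e1, e2] at this
        · by_contra hne
          exact hmin m hm2 ⟨by omega, Or.inr hne⟩
      have hsplit : win w i d = win w i a ++ (win w (i + a) (e - 3 * n - (i + a)) ++
          win w (e - 3 * n) (L - (e - 3 * n))) := by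
        have e1 : d = a + ((e - 3 * n - (i + a)) + (L - (e - 3 * n))) := by omega
        have e2 : i + a + (e - 3 * n - (i + a)) = e - 3 * n := by omega
        conv_lhs => rw [e1, win_add, win_add, e2]
      have hA : Ht n n (win w i a) := (Ht.letters w n i a hn).mono (by omega)
      have hB : Ht n 2 (win w (i + a) (e - 3 * n - (i + a))) := by
        apply Ht.periodic w n p _ _ hp1 (by omega)
        intro j hj
        have := hper2 (i + a + p + j) (by omega) (by omega)
        rw [← this]
        congr 1
        omega
      rw [hsplit]
      by_cases hfin2 : L < e - 3 * n + M
      · refine (hA.app (hB.app (Ht.letters w n (e - 3 * n) (L - (e - 3 * n)) hn))).mono ?_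
        omega
      · have hne : w (e - p) ≠ w e := by
          rcases he2 with h | h
          · omega
          · exact h
        have hrich : Rich w L n M (e - 3 * n) := by
          refine ⟨by omega, fun a' q hq1 hq2 => ?_⟩
          by_contra hcon
          have hq : ∀ m, e - 3 * n + a' + q ≤ m → m ≤ e → w (m - q) = w m := by
            intro m hm1 hm2
            by_contra hne'
            apply hcon
            refine ⟨m - (e - 3 * n + a' + q), by omega, ?_⟩
            have e1 : e - 3 * n + a' + (m - (e - 3 * n + a' + q)) = m - q := by omega
            have e2 : e - 3 * n + a' + q + (m - (e - 3 * n + a' + q)) = m := by omega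
            rwa [e1, e2]
          apply hne
          have h1 := hq e (by omega) le_rfl
          have h2 := hper2 (e - q) (by omega) (by omega)
          have h3 := hq (e - p) (by omega) (by omega)
          have e1 : e - p - q = e - q - p := by omega
          rw [← h1, ← h2, ← h3, e1]
        obtain ⟨c1, c2⟩ := consume (e - 3 * n) (by omega) (by omega) hrich ih
        refine (hA.app (hB.app c1)).mono ?_
        obtain ⟨R, hR⟩ := Nat.exists_eq_add_of_le c2
        rw [hR, Nat.add_sub_cancel_left, mul_add]
        omega

theorem nat_bound (W : List α) (d : α) [Fintype α] (n k : ℕ) (hn : 2 ≤ n) (hk : 4 * n < 2 ^ k)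
    (hW : ¬ IsNDivisible n W) :
    Ht n ((n + 3) * (2 ^ k * (n * (Fintype.card α * (3 * n ^ 3) ^ k))) + (2 ^ k + n + 2)) W := by
  classical
  have hw := win_getD W d
  rw [← hw] at hW ⊢
  have h1 := decomp (fun i => W.getD i d) W.length n (2 ^ k) hn hk W.length 0 (by omega)
  refine h1.mono ?_
  gcongr
  apply rich_card (fun i => W.getD i d) W.length n k hn (by omega) hW
    (Fintype.card_pos_iff.2 ⟨d⟩)
  intro i hi
  exact (Finset.mem_filter.1 hi).2

end

theorem num_bound (l n : ℕ) (hl : 1 ≤ l) (hn : 2 ≤ n) :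
    (n + 3) * (2 ^ (Nat.log 2 n + 4) * (n * (l * (3 * n ^ 3) ^ (Nat.log 2 n + 4)))) +
      (2 ^ (Nat.log 2 n + 4) + n + 2) ≤ 2 ^ 14 * l * n ^ (17 + 3 * Nat.log 2 n) := by
  set m := Nat.log 2 n with hm
  have h2 : 2 ^ (m + 4) ≤ 16 * n := by
    have := Nat.pow_log_le_self 2 (show n ≠ 0 by omega)
    rw [← hm] at this
    rw [pow_add]; omega
  have h3 : 3 ^ (m + 4) ≤ 256 * n ^ 2 := by
    calc 3 ^ (m + 4) ≤ 4 ^ (m + 4) := Nat.pow_le_pow_left (by norm_num) _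
      _ = (2 ^ (m + 4)) ^ 2 := by rw [← pow_mul, mul_comm, pow_mul]; norm_num
      _ ≤ (16 * n) ^ 2 := Nat.pow_le_pow_left h2 _
      _ = _ := by ring
  have h4 : (3 * n ^ 3) ^ (m + 4) ≤ 256 * n ^ 2 * n ^ (12 + 3 * m) := by
    rw [mul_pow, ← pow_mul]
    have : 3 * (m + 4) = 12 + 3 * m := by ring
    rw [this]
    exact Nat.mul_le_mul_right _ h3
  have h5 : n ≤ l * n ^ (17 + 3 * m) := by
    calc n = 1 * n ^ 1 := by simp
      _ ≤ _ := Nat.mul_le_mul hl (Nat.pow_le_pow_right (by omega) (by omega))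
  calc _ ≤ (3 * n) * (16 * n * (n * (l * (256 * n ^ 2 * n ^ (12 + 3 * m))))) + 18 * n := by
        gcongr ?_ * (?_ * (n * (l * ?_))) + ?_
        · omega
        · omega
    _ = 12288 * (l * n ^ (17 + 3 * m)) + 18 * n := by
        have : n ^ (17 + 3 * m) = n ^ 5 * n ^ (12 + 3 * m) := by rw [← pow_add]; congr 1; ring
        rw [this]; ring
    _ ≤ 12288 * (l * n ^ (17 + 3 * m)) + 18 * (l * n ^ (17 + 3 * m)) := by omega
    _ ≤ _ := by rw [mul_assoc (2 ^ 14)]; norm_num; omega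

theorem real_bound (l n : ℕ) (hn : 2 ≤ n) :
    ((2 ^ 14 * l * n ^ (17 + 3 * Nat.log 2 n) : ℕ) : ℝ) ≤ (4 : ℝ) ^ (21 * Real.logb 3 4 + 17) * l *
        (n : ℝ) ^ (30 * Real.logb 3 4 + 10 + 12 * Real.logb 3 (n : ℝ)) := by
  have hn1 : (1 : ℝ) ≤ n := by exact_mod_cast (by omega : 1 ≤ n)
  have h4 : 1 ≤ Real.logb 3 4 := by
    rw [Real.le_logb_iff_rpow_le (by norm_num) (by norm_num)]; norm_num
  have h2 : (1 / 2 : ℝ) ≤ Real.logb 3 2 := by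
    rw [Real.le_logb_iff_rpow_le (by norm_num) (by norm_num), ← Real.sqrt_eq_rpow]
    rw [Real.sqrt_le_left (by norm_num)]; norm_num
  have h5 : (Nat.log 2 n : ℝ) * Real.logb 3 2 ≤ Real.logb 3 n := by
    rw [← Real.logb_pow]
    apply Real.logb_le_logb_of_le (by norm_num) (by positivity)
    exact_mod_cast Nat.pow_log_le_self 2 (show n ≠ 0 by omega)
  have h6 : (0 : ℝ) ≤ Nat.log 2 n := Nat.cast_nonneg _
  push_cast
  gcongr ?_ * _ * ?_
  · calc _ ≤ (4 : ℝ) ^ (17 : ℝ) := by norm_num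
      _ ≤ _ := Real.rpow_le_rpow_of_exponent_le (by norm_num) (by linarith)
  · rw [← Real.rpow_natCast]
    apply Real.rpow_le_rpow_of_exponent_le hn1
    push_cast
    nlinarith

end Shir

/-- Main theorem: the set of non-`n`-divisible words over an `l`-letter alphabet has
height at most `Φ(n,l) = 4^(21·log₃4+17) · l · n^(30·log₃4+10+12·log₃ n)` over the set of
words of length less than `n`: every non-`n`-divisible word is a product of at most
`Φ(n,l)` powers of words of length `< n`. -/
theorem stmt_17 (l n : ℕ) (hl : 1 ≤ l) (hn : 2 ≤ n) (W : List (Fin l))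
    (hW : ¬ IsNDivisible n W) :
    ∃ r : ℕ, (r : ℝ) ≤ (4 : ℝ) ^ (21 * Real.logb 3 4 + 17) * l *
        (n : ℝ) ^ (30 * Real.logb 3 4 + 10 + 12 * Real.logb 3 (n : ℝ)) ∧
      ∃ (us : Fin r → List (Fin l)) (ks : Fin r → ℕ),
        (∀ i, (us i).length < n) ∧
        W = (List.ofFn fun i => (List.replicate (ks i) (us i)).flatten).flatten := by
  have hk : 4 * n < 2 ^ (Nat.log 2 n + 4) := by
    have := Nat.lt_pow_succ_log_self (b := 2) (by norm_num) n
    have e : 2 ^ (Nat.log 2 n + 4) = 8 * 2 ^ (Nat.log 2 n).succ := by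
      rw [Nat.succ_eq_add_one, pow_add, pow_add]; ring
    omega
  obtain ⟨ps, h1, h2, h3⟩ := Shir.nat_bound W ⟨0, hl⟩ n _ hn hk hW
  rw [Fintype.card_fin] at h1
  refine ⟨ps.length, ?_, fun i => (ps.get i).1, fun i => (ps.get i).2, ?_, ?_⟩
  · refine le_trans ?_ (Shir.real_bound l n hn)
    exact_mod_cast h1.trans (Shir.num_bound l n hl hn)
  · intro i
    exact h2 _ (List.get_mem ps i)
  · rw [h3]
    congr 1
    apply List.ext_getElem
    · simp
    · intro i _ _
      simp
end
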